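/- For every integer k ≥ 2 and every set A of words over k satisfying limsup_{n→∞} |A ∩ [k]^n| / k^n > 0, there exist a word c over k and an infinite sequence (w_n)_{n∈ℕ} of left variable words over k such that the set {c} ∪ {c⌢w_0(a_0)⌢···⌢w_n(a_n) : n ∈ ℕ and a_0,…,a_n ∈ [k]} is contained in A. -/

import Mathlib

/-!
Words over `k` are elements of `List (Fin k)`.  Variable words over `k` are lists over
`Option (Fin k)` in which `none` (the variable `v`) occurs; a left variable word is one
whose leftmost letter is the variable.  `subst w a` substitutes `a` for every occurrence
of the variable.
-/

/-- A word over `k`: a finite sequence with values in `[k]`. -/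
abbrev Word (k : ℕ) := List (Fin k)

/-- A "possibly variable" letter sequence: `none` plays the role of the variable `v`. -/
abbrev VWord (k : ℕ) := List (Option (Fin k))

/-- Substitution of the letter `a` for every occurrence of the variable. -/
def subst {k : ℕ} (w : VWord k) (a : Fin k) : Word k := w.map (fun o => o.getD a)

/-- `w` is a left variable word: its leftmost letter is the variable `v`. -/
def IsLeftVar {k : ℕ} (w : VWord k) : Prop := w.head? = some none

/-- The word `c ⌢ w₀(a₀) ⌢ ⋯ ⌢ wₙ(aₙ)`. -/
def csWord {k : ℕ} (c : Word k) (ws : ℕ → VWord k) (n : ℕ) (a : ℕ → Fin k) : Word k :=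
  c ++ ((List.range (n + 1)).map fun i => subst (ws i) (a i)).flatten

/-- The set `{c} ∪ {c ⌢ w₀(a₀) ⌢ ⋯ ⌢ wₙ(aₙ) : n ∈ ℕ, a₀,…,aₙ ∈ [k]}`. -/
def csSetInf {k : ℕ} (c : Word k) (ws : ℕ → VWord k) : Set (Word k) :=
  insert c {x | ∃ n : ℕ, ∃ a : ℕ → Fin k, x = csWord c ws n a}

/-- The density `|A ∩ [k]^n| / k^n`. -/
noncomputable def dens (k n : ℕ) (A : Set (Word k)) : ℝ :=
  (Set.ncard {x ∈ A | x.length = n} : ℝ) / (k : ℝ) ^ n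

/-!
The proof is by induction on the alphabet. The property that is carried along is that a random set
of words which contains every word with probability at least `κ > 0` contains, with positive
probability, a *line*: a word `c` together with all the words `c ⌢ w(b)`, for some left variable
word `w`. It yields whole trees, since lines can be chosen one after the other while the quotients
of the set by the lines chosen so far stay dense. Randomness is with respect to finitely additive
means: they are closed under limits along ultrafilters, so suprema of densities are attained and
uniform versions of the property come for free.

Suppose that the property holds for `α` but fails for `Option α`, and let `E` be a line-free random
set of maximal density `δ`. The property for `α` provides, with probability bounded below, lines of
`E` in the directions of `α`, and the remaining point of such a line must avoid the set. Membership
of the other points is a family of constraints, one for each letter `b` of `α`, which do not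
distinguish `none` from `b`. Hence the density of `E` exceeds `δ` on some cell cut out by these
constraints.

The constraints are removed one at a time. Averaging over the replacement of some of the letters
`some b` and `none` by each other does not affect the constraint for `b`. By an energy argument the
lengths of the blocks of a word can be chosen such that this average hardly depends on the remaining
letters `some b` and `none`, hence is essentially a function of words over `α`. The property for `α`
then gives arbitrarily high trees on all of whose nodes the average excess is positive, so that the
constraint for `b` holds automatically there. When no constraint is left we have a line-free
random set of density greater than `δ`, a contradiction.
-/

namespace CarlsonSimpson

open Filter Topology Finset

universe u v

/-! ### Bounded functions and indicators -/

/-- A real-valued function is bounded; this is the domain on which a `Mean` is required to be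
positive. -/
@[fun_prop]
def IsBdd {S : Type*} (f : S → ℝ) : Prop := ∃ C : ℝ, ∀ s, |f s| ≤ C

namespace IsBdd

variable {S T ι : Type*} {f g : S → ℝ}

@[fun_prop]
theorem const (c : ℝ) : IsBdd (fun _ : S => c) := ⟨|c|, fun _ => le_rfl⟩

@[fun_prop]
theorem add (hf : IsBdd f) (hg : IsBdd g) : IsBdd (fun s => f s + g s) := by
  obtain ⟨C, hC⟩ := hf
  obtain ⟨D, hD⟩ := hg
  exact ⟨C + D, fun s => (abs_add_le _ _).trans (add_le_add (hC s) (hD s))⟩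

@[fun_prop]
theorem neg (hf : IsBdd f) : IsBdd (fun s => -f s) := by simpa only [IsBdd, abs_neg] using hf

@[fun_prop]
theorem sub (hf : IsBdd f) (hg : IsBdd g) : IsBdd (fun s => f s - g s) := by
  simpa only [sub_eq_add_neg] using hf.add hg.neg

@[fun_prop]
theorem mul (hf : IsBdd f) (hg : IsBdd g) : IsBdd (fun s => f s * g s) := by
  obtain ⟨C, hC⟩ := hf
  obtain ⟨D, hD⟩ := hg
  refine ⟨C * D, fun s => ?_⟩
  rw [abs_mul]
  exact mul_le_mul (hC s) (hD s) (abs_nonneg _) ((abs_nonneg _).trans (hC s))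

@[fun_prop]
theorem pow (hf : IsBdd f) (n : ℕ) : IsBdd (fun s => f s ^ n) := by
  obtain ⟨C, hC⟩ := hf
  exact ⟨C ^ n, fun s => by rw [abs_pow]; exact pow_le_pow_left₀ (abs_nonneg _) (hC s) n⟩

@[fun_prop]
theorem abs (hf : IsBdd f) : IsBdd (fun s => |f s|) := by simpa only [IsBdd, abs_abs] using hf

@[fun_prop]
theorem sum (t : Finset ι) {f : ι → S → ℝ} (hf : ∀ i, IsBdd (f i)) :
    IsBdd (fun s => ∑ i ∈ t, f i s) := by
  choose C hC using hf
  exact ⟨∑ i ∈ t, C i, fun s => (abs_sum_le_sum_abs _ _).trans (sum_le_sum fun i _ => hC i s)⟩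

theorem comp (hf : IsBdd f) (φ : T → S) : IsBdd (fun t => f (φ t)) := by
  obtain ⟨C, hC⟩ := hf
  exact ⟨C, fun t => hC _⟩

theorem mono_abs (hg : IsBdd g) (h : ∀ s, |f s| ≤ g s) : IsBdd f := by
  obtain ⟨C, hC⟩ := hg
  exact ⟨C, fun s => (h s).trans ((le_abs_self _).trans (hC s))⟩

theorem exists_tendsto (U : Ultrafilter S) (hf : IsBdd f) : ∃ x, Tendsto f U (𝓝 x) := by
  obtain ⟨C, hC⟩ := hf
  obtain ⟨x, -, hx⟩ := isCompact_iff_ultrafilter_le_nhds.1 (isCompact_Icc (a := -C) (b := C))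
    (U.map f) (le_principal_iff.2 <| mem_map.2 <| univ_mem' fun n => abs_le.1 (hC n))
  exact ⟨x, hx⟩

end IsBdd

open Classical in
/-- The real-valued indicator of a proposition; the probability of an event `p` under a mean `E`
is `E fun s => ind (p s)`. -/
noncomputable def ind (p : Prop) : ℝ := if p then 1 else 0

theorem ind_of_true {p : Prop} (h : p) : ind p = 1 := by simp [ind, h]

theorem ind_of_false {p : Prop} (h : ¬p) : ind p = 0 := by simp [ind, h]

theorem ind_nonneg (p : Prop) : 0 ≤ ind p := by unfold ind; split_ifs <;> norm_num

theorem ind_le_one (p : Prop) : ind p ≤ 1 := by unfold ind; split_ifs <;> norm_num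

theorem abs_ind_le_one (p : Prop) : |ind p| ≤ 1 := by
  rw [abs_of_nonneg (ind_nonneg p)]; exact ind_le_one p

theorem ind_mono {p q : Prop} (h : p → q) : ind p ≤ ind q := by
  by_cases hp : p
  · rw [ind_of_true hp, ind_of_true (h hp)]
  · rw [ind_of_false hp]; exact ind_nonneg _

theorem ind_congr {p q : Prop} (h : p ↔ q) : ind p = ind q := by rw [propext h]

theorem ind_and (p q : Prop) : ind (p ∧ q) = ind p * ind q := by
  by_cases hp : p <;> by_cases hq : q <;> simp [ind, hp, hq]

theorem ind_not (p : Prop) : ind (¬p) = 1 - ind p := by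
  by_cases hp : p <;> simp [ind, hp]

theorem ind_forall {ι : Type*} [Fintype ι] (p : ι → Prop) : ind (∀ i, p i) = ∏ i, ind (p i) := by
  by_cases h : ∀ i, p i
  · rw [ind_of_true h, prod_eq_one fun i _ => ind_of_true (h i)]
  · obtain ⟨i, hi⟩ := not_forall.1 h
    rw [ind_of_false h, prod_eq_zero (mem_univ i) (ind_of_false hi)]

@[fun_prop]
theorem IsBdd.ind {S : Type*} (p : S → Prop) : IsBdd (fun s => ind (p s)) :=
  ⟨1, fun s => abs_ind_le_one (p s)⟩

/-! ### Finitely additive means -/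

/-- A finitely additive probability mean on `S`. For convenience it is a linear functional on all
real functions; only its values on bounded functions carry information. -/
structure Mean (S : Type*) where
  /-- The underlying linear functional. -/
  toLinearMap : (S → ℝ) →ₗ[ℝ] ℝ
  map_one' : toLinearMap (fun _ => 1) = 1
  nonneg' : ∀ f : S → ℝ, IsBdd f → (∀ s, 0 ≤ f s) → 0 ≤ toLinearMap f

namespace Mean

instance {S : Type*} : CoeFun (Mean S) (fun _ => (S → ℝ) → ℝ) := ⟨fun E => E.toLinearMap⟩

variable {S T ι : Type*} (E : Mean S) {f g : S → ℝ} {c : ℝ}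

theorem apply_congr (h : ∀ s, f s = g s) : E f = E g := by rw [funext h]

theorem apply_add (f g : S → ℝ) : E (fun s => f s + g s) = E f + E g := map_add E.toLinearMap f g

theorem apply_sub (f g : S → ℝ) : E (fun s => f s - g s) = E f - E g := map_sub E.toLinearMap f g

theorem apply_const_mul (c : ℝ) (f : S → ℝ) : E (fun s => c * f s) = c * E f :=
  map_smul E.toLinearMap c f

theorem apply_mul_const (f : S → ℝ) (c : ℝ) : E (fun s => f s * c) = E f * c := by
  simp_rw [mul_comm _ c]; exact E.apply_const_mul c f

theorem apply_sum (t : Finset ι) (f : ι → S → ℝ) :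
    E (fun s => ∑ i ∈ t, f i s) = ∑ i ∈ t, E (f i) := by
  rw [← map_sum E.toLinearMap f t]
  exact E.apply_congr fun s => (Finset.sum_apply s t f).symm

theorem apply_const (c : ℝ) : E (fun _ => c) = c := by
  simpa [E.map_one'] using E.apply_const_mul c (fun _ => 1)

theorem apply_nonneg (hf : IsBdd f) (h : ∀ s, 0 ≤ f s) : 0 ≤ E f := E.nonneg' f hf h

theorem apply_mono (hf : IsBdd f) (hg : IsBdd g) (h : ∀ s, f s ≤ g s) : E f ≤ E g := by
  have := E.apply_nonneg (hg.sub hf) fun s => sub_nonneg.2 (h s)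
  rwa [E.apply_sub, sub_nonneg] at this

theorem apply_le (hf : IsBdd f) (h : ∀ s, f s ≤ c) : E f ≤ c := by
  simpa only [E.apply_const] using E.apply_mono hf (IsBdd.const c) h

theorem le_apply (hf : IsBdd f) (h : ∀ s, c ≤ f s) : c ≤ E f := by
  simpa only [E.apply_const] using E.apply_mono (IsBdd.const c) hf h

theorem abs_apply_le (h : ∀ s, |f s| ≤ c) : |E f| ≤ c :=
  abs_le.2 ⟨E.le_apply ⟨c, h⟩ fun s => (abs_le.1 (h s)).1,
    E.apply_le ⟨c, h⟩ fun s => (abs_le.1 (h s)).2⟩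

theorem apply_eq_zero_of_le (hf : ∀ s, 0 ≤ f s) (hg : IsBdd g) (h : ∀ s, f s ≤ g s)
    (h0 : E g = 0) : E f = 0 := by
  have hb : IsBdd f := hg.mono_abs fun s => by rw [abs_of_nonneg (hf s)]; exact h s
  exact le_antisymm (h0 ▸ E.apply_mono hb hg h) (E.apply_nonneg hb hf)

theorem apply_sq_sub_const (f : S → ℝ) (c : ℝ) :
    E (fun s => (f s - c) ^ 2) = E (fun s => f s ^ 2) - 2 * c * E f + c ^ 2 := by
  have h : ∀ s, (f s - c) ^ 2 = f s ^ 2 - 2 * c * f s + c ^ 2 := fun s => by ring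
  simp only [h, E.apply_add, E.apply_sub, E.apply_const_mul, E.apply_const]

theorem sq_apply_le (hf : IsBdd f) : E f ^ 2 ≤ E (fun s => f s ^ 2) := by
  have h : 0 ≤ E (fun s => (f s - E f) ^ 2) :=
    E.apply_nonneg (by fun_prop) fun s => sq_nonneg _
  rw [E.apply_sq_sub_const] at h
  linarith

theorem apply_abs_le_of_sq_le (hf : IsBdd f) (hc : 0 ≤ c) (h : E (fun s => f s ^ 2) ≤ c ^ 2) :
    E (fun s => |f s|) ≤ c := by
  refine le_of_sq_le_sq ((E.sq_apply_le hf.abs).trans ?_) hc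
  simpa only [sq_abs] using h

theorem apply_ind_nonneg (p : S → Prop) : 0 ≤ E (fun s => ind (p s)) :=
  E.apply_nonneg (by fun_prop) fun _ => ind_nonneg _

theorem apply_ind_le_one (p : S → Prop) : E (fun s => ind (p s)) ≤ 1 :=
  E.apply_le (by fun_prop) fun _ => ind_le_one _

theorem apply_ind_mono {p q : S → Prop} (h : ∀ s, p s → q s) :
    E (fun s => ind (p s)) ≤ E (fun s => ind (q s)) :=
  E.apply_mono (by fun_prop) (by fun_prop) fun s => ind_mono (h s)

theorem div_two_mul_le_apply_ind {C : ℝ} (hC : 0 < C) (hc : 0 ≤ c) (hf : ∀ s, |f s| ≤ C)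
    (h : c ≤ E f) : c / (2 * C) ≤ E fun s => ind (c / 2 ≤ f s) := by
  have hle : ∀ s, f s ≤ c / 2 + C * ind (c / 2 ≤ f s) := fun s => by
    by_cases hs : c / 2 ≤ f s
    · rw [ind_of_true hs]
      linarith [(abs_le.1 (hf s)).2]
    · rw [ind_of_false hs]
      linarith
  have hE := h.trans (E.apply_mono ⟨C, hf⟩ (by fun_prop) hle)
  rw [E.apply_add, E.apply_const, E.apply_const_mul] at hE
  rw [div_le_iff₀ (by positivity)]
  linarith

theorem sub_le_apply_ind_mul {p : S → Prop} {d d' : S → ℝ} {l : ℝ} (hf : IsBdd f) (hd : IsBdd d)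
    (hd' : IsBdd d') (hl : 0 ≤ l) (hdl : E (fun s => d s ^ 2) ≤ l ^ 2)
    (hdl' : E (fun s => d' s ^ 2) ≤ l ^ 2) (h : ∀ s, p s → c + d s - d' s ≤ f s) :
    E (fun s => ind (p s)) * c - 2 * l ≤ E fun s => ind (p s) * f s := by
  have hle : ∀ s, ind (p s) * c - |d s| - |d' s| ≤ ind (p s) * f s := fun s => by
    by_cases hs : p s
    · rw [ind_of_true hs]
      linarith [h s hs, neg_abs_le (d s), le_abs_self (d' s)]
    · rw [ind_of_false hs]
      linarith [abs_nonneg (d s), abs_nonneg (d' s)]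
  have hE := E.apply_mono (by fun_prop) (by fun_prop) hle
  rw [E.apply_sub, E.apply_sub, E.apply_mul_const] at hE
  linarith [E.apply_abs_le_of_sq_le hd hl hdl, E.apply_abs_le_of_sq_le hd' hl hdl']

theorem isBdd_apply (E : T → Mean S) (hf : IsBdd f) : IsBdd (fun t => E t f) := by
  obtain ⟨C, hC⟩ := hf
  exact ⟨C, fun t => (E t).abs_apply_le hC⟩

/-- The point mass at `s`. -/
def pure (s : S) : Mean S where
  toLinearMap := LinearMap.proj s
  map_one' := rfl
  nonneg' := fun _ _ h => h s

@[simp] theorem pure_apply (s : S) (f : S → ℝ) : pure s f = f s := rfl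

/-- The image of a mean under a map. -/
def map (φ : S → T) (E : Mean S) : Mean T where
  toLinearMap := E.toLinearMap.comp (LinearMap.funLeft ℝ ℝ φ)
  map_one' := E.map_one'
  nonneg' := fun _ hf h => E.apply_nonneg (hf.comp φ) fun _ => h _

@[simp] theorem map_apply (φ : S → T) (E : Mean S) (f : T → ℝ) :
    map φ E f = E (fun s => f (φ s)) := rfl

/-- The mixture of the means `E t`, with `t` distributed according to `P`. -/
def bind (P : Mean T) (E : T → Mean S) : Mean S where
  toLinearMap := P.toLinearMap.comp (LinearMap.pi fun t => (E t).toLinearMap)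
  map_one' := by
    change P (fun t => E t (fun _ => 1)) = 1
    simp only [apply_const]
  nonneg' := fun _ hf h => P.apply_nonneg (isBdd_apply E hf) fun t => (E t).apply_nonneg hf h

@[simp] theorem bind_apply (P : Mean T) (E : T → Mean S) (f : S → ℝ) :
    bind P E f = P (fun t => E t f) := rfl

/-- The product of two means, applying first the second one. The order matters: iterated
finitely additive means do not commute in general. -/
def prod (P : Mean T) (E : Mean S) : Mean (T × S) := P.bind fun t => E.map (Prod.mk t)

@[simp] theorem prod_apply (P : Mean T) (E : Mean S) (f : T × S → ℝ) :
    P.prod E f = P fun t => E fun s => f (t, s) := rfl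

/-- The mean `E` reweighted by the density `h` and normalized. -/
noncomputable def cond (h : S → ℝ) (hb : IsBdd h) (h0 : ∀ s, 0 ≤ h s) (hp : 0 < E h) :
    Mean S where
  toLinearMap := (E h)⁻¹ • E.toLinearMap.comp (LinearMap.pi fun s => h s • LinearMap.proj s)
  map_one' := by
    change (E h)⁻¹ * E (fun s => h s * 1) = 1
    simp only [mul_one]
    exact inv_mul_cancel₀ hp.ne'
  nonneg' := fun f hf hf0 => by
    change 0 ≤ (E h)⁻¹ * E (fun s => h s * f s)
    exact mul_nonneg (inv_nonneg.2 hp.le)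
      (E.apply_nonneg (hb.mul hf) fun s => mul_nonneg (h0 s) (hf0 s))

section cond

variable {h : S → ℝ} {hb : IsBdd h} {h0 : ∀ s, 0 ≤ h s} {hp : 0 < E h}

theorem mul_cond_apply (f : S → ℝ) : E h * E.cond h hb h0 hp f = E (fun s => h s * f s) :=
  mul_inv_cancel_left₀ hp.ne' _

theorem cond_apply_eq_zero (hf : IsBdd f) (hf0 : ∀ s, 0 ≤ f s) (hE : E f = 0) :
    E.cond h hb h0 hp f = 0 := by
  obtain ⟨C, hC⟩ := id hb
  have hmul : E (fun s => h s * f s) = 0 :=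
    E.apply_eq_zero_of_le (fun s => mul_nonneg (h0 s) (hf0 s)) ((IsBdd.const C).mul hf)
      (fun s => mul_le_mul_of_nonneg_right ((le_abs_self _).trans (hC s)) (hf0 s))
      (by rw [E.apply_const_mul, hE, mul_zero])
  rw [← E.mul_cond_apply (hb := hb) (h0 := h0) (hp := hp)] at hmul
  exact (mul_eq_zero.1 hmul).resolve_left hp.ne'

end cond

/-! ### Limits of means along an ultrafilter -/

variable (ι) in
/-- The space of bounded functions, the natural domain of the limit along an ultrafilter. -/
def bddSubmodule : Submodule ℝ (ι → ℝ) where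
  carrier := {f | IsBdd f}
  add_mem' := IsBdd.add
  zero_mem' := IsBdd.const 0
  smul_mem' := fun c _ hf => (IsBdd.const c).mul hf

theorem exists_linearMap_tendsto (U : Ultrafilter ι) :
    ∃ L : (ι → ℝ) →ₗ[ℝ] ℝ, ∀ f, IsBdd f → Tendsto f U (𝓝 (L f)) := by
  choose l hl using fun f : bddSubmodule ι => IsBdd.exists_tendsto U f.2
  let l' : bddSubmodule ι →ₗ[ℝ] ℝ :=
    { toFun := l
      map_add' := fun f g => tendsto_nhds_unique (hl (f + g)) ((hl f).add (hl g))
      map_smul' := fun c f => tendsto_nhds_unique (hl (c • f)) ((hl f).const_mul c) }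
  obtain ⟨L, hL⟩ := LinearMap.exists_extend l'
  refine ⟨L, fun f hf => ?_⟩
  rw [show L f = l ⟨f, hf⟩ from LinearMap.congr_fun hL ⟨f, hf⟩]
  exact hl ⟨f, hf⟩

/-- The limit along an ultrafilter, as a mean. -/
noncomputable def ofUltrafilter (U : Ultrafilter ι) : Mean ι where
  toLinearMap := (exists_linearMap_tendsto U).choose
  map_one' := tendsto_nhds_unique ((exists_linearMap_tendsto U).choose_spec _ (IsBdd.const 1))
    tendsto_const_nhds
  nonneg' := fun f hf h =>
    ge_of_tendsto ((exists_linearMap_tendsto U).choose_spec f hf) (univ_mem' h)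

section ofUltrafilter

variable (U : Ultrafilter ι) {f g : ι → ℝ}

theorem tendsto_ofUltrafilter (hf : IsBdd f) : Tendsto f U (𝓝 (ofUltrafilter U f)) :=
  (exists_linearMap_tendsto U).choose_spec f hf

theorem le_ofUltrafilter (hf : IsBdd f) (h : ∀ᶠ n in U, c ≤ f n) : c ≤ ofUltrafilter U f :=
  ge_of_tendsto (tendsto_ofUltrafilter U hf) h

theorem ofUltrafilter_congr (hf : IsBdd f) (hg : IsBdd g) (h : ∀ᶠ n in U, f n = g n) :
    ofUltrafilter U f = ofUltrafilter U g :=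
  tendsto_nhds_unique_of_eventuallyEq (tendsto_ofUltrafilter U hf) (tendsto_ofUltrafilter U hg) h

theorem eventually_lt_of_ofUltrafilter_lt (hf : IsBdd f) (h : ofUltrafilter U f < c) :
    ∀ᶠ n in U, f n < c :=
  (tendsto_ofUltrafilter U hf).eventually (gt_mem_nhds h)

theorem eventually_lt_of_lt_ofUltrafilter (hf : IsBdd f) (h : c < ofUltrafilter U f) :
    ∀ᶠ n in U, c < f n :=
  (tendsto_ofUltrafilter U hf).eventually (lt_mem_nhds h)

theorem ofUltrafilter_map {κ : Type*} (φ : ι → κ) {f : κ → ℝ} (hf : IsBdd f) :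
    ofUltrafilter (U.map φ) f = ofUltrafilter U (fun n => f (φ n)) :=
  tendsto_nhds_unique (tendsto_map'_iff.1 (tendsto_ofUltrafilter (U.map φ) hf))
    (tendsto_ofUltrafilter U (hf.comp φ))

end ofUltrafilter

/-- A limit point of a sequence of means: its limit along a fixed nonprincipal ultrafilter. -/
noncomputable def seqLimit (E : ℕ → Mean S) : Mean S := (ofUltrafilter (hyperfilter ℕ)).bind E

theorem le_seqLimit (E : ℕ → Mean S) (hf : IsBdd f) {e : ℕ → ℝ} (he : Tendsto e atTop (𝓝 0))
    (h : ∀ᶠ n in atTop, c - e n ≤ E n f) : c ≤ seqLimit E f := by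
  have hc : Tendsto (fun n => c - e n) (hyperfilter ℕ) (𝓝 c) := by
    simpa using (tendsto_const_nhds.sub he).mono_left Nat.hyperfilter_le_atTop
  exact le_of_tendsto_of_tendsto hc (tendsto_ofUltrafilter _ (isBdd_apply E hf))
    (Nat.hyperfilter_le_atTop h)

theorem seqLimit_le (E : ℕ → Mean S) (hf : IsBdd f) {e : ℕ → ℝ} (he : Tendsto e atTop (𝓝 0))
    (h : ∀ᶠ n in atTop, E n f ≤ c + e n) : seqLimit E f ≤ c := by
  have hc : Tendsto (fun n => c + e n) (hyperfilter ℕ) (𝓝 c) := by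
    simpa using (tendsto_const_nhds.add he).mono_left Nat.hyperfilter_le_atTop
  exact le_of_tendsto_of_tendsto (tendsto_ofUltrafilter _ (isBdd_apply E hf)) hc
    (Nat.hyperfilter_le_atTop h)

theorem seqLimit_apply_eq (E : ℕ → Mean S) (h : ∀ n, E n f = c) : seqLimit E f = c := by
  simp only [seqLimit, bind_apply, h, apply_const]

end Mean

/-! ### Averages over words -/

/-- A mean is finitary if it is a finite convex combination of point masses. Such means commute
with every mean and are monotone on unbounded functions as well. -/
def IsFinitary {T : Type*} (P : Mean T) : Prop :=
  ∃ (ι : Type) (_ : Fintype ι) (w : ι → ℝ) (x : ι → T),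
    (∀ i, 0 ≤ w i) ∧ ∀ f : T → ℝ, P f = ∑ i, w i * f (x i)

namespace IsFinitary

variable {S T R : Type*} {P : Mean T} {f g : T → ℝ}

theorem pure (x : T) : IsFinitary (Mean.pure x) :=
  ⟨Unit, inferInstance, fun _ => 1, fun _ => x, fun _ => zero_le_one, fun f => by simp⟩

theorem map (hP : IsFinitary P) (φ : T → R) : IsFinitary (P.map φ) := by
  obtain ⟨ι, _, w, x, hw, hP⟩ := hP
  exact ⟨ι, inferInstance, w, fun i => φ (x i), hw, fun f => hP _⟩

theorem bind (hP : IsFinitary P) {Q : T → Mean R} (hQ : ∀ x, IsFinitary (Q x)) :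
    IsFinitary (P.bind Q) := by
  obtain ⟨ι, _, w, x, hw, hP⟩ := hP
  choose κ _ v y hv hQ using hQ
  refine ⟨Σ i, κ (x i), inferInstance, fun p => w p.1 * v _ p.2, fun p => y _ p.2,
    fun p => mul_nonneg (hw _) (hv _ _), fun f => ?_⟩
  simp only [Mean.bind_apply, hP, hQ, Fintype.sum_sigma, mul_sum, mul_assoc]

theorem mono (hP : IsFinitary P) (h : ∀ x, f x ≤ g x) : P f ≤ P g := by
  obtain ⟨ι, _, w, x, hw, hP⟩ := hP
  simp only [hP]
  exact sum_le_sum fun i _ => mul_le_mul_of_nonneg_left (h _) (hw i)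

theorem nonneg (hP : IsFinitary P) (h : ∀ x, 0 ≤ f x) : 0 ≤ P f := by
  simpa only [P.apply_const] using hP.mono h

theorem comm (hP : IsFinitary P) (E : Mean S) (f : T → S → ℝ) :
    E (fun s => P fun x => f x s) = P fun x => E (f x) := by
  obtain ⟨ι, _, w, x, -, hP⟩ := hP
  simp only [hP, E.apply_sum, E.apply_const_mul]

theorem sq_apply_le (hP : IsFinitary P) (f : T → ℝ) : P f ^ 2 ≤ P (fun x => f x ^ 2) := by
  have h : 0 ≤ P (fun x => (f x - P f) ^ 2) := hP.nonneg fun _ => sq_nonneg _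
  rw [P.apply_sq_sub_const] at h
  linarith

end IsFinitary

section WordMean

variable {K : Type*} [Fintype K] [Nonempty K]

/-- The uniform mean on a finite type. -/
noncomputable def unif (K : Type*) [Fintype K] [Nonempty K] : Mean K where
  toLinearMap := (Fintype.card K : ℝ)⁻¹ • ∑ b : K, LinearMap.proj b
  map_one' := by simp
  nonneg' := fun f _ h => by
    simp only [LinearMap.smul_apply, LinearMap.sum_apply, LinearMap.proj_apply, smul_eq_mul]
    exact mul_nonneg (by positivity) (sum_nonneg fun b _ => h b)

theorem unif_apply (f : K → ℝ) : unif K f = (Fintype.card K : ℝ)⁻¹ * ∑ b : K, f b := by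
  simp [unif]

theorem isFinitary_unif : IsFinitary (unif K) := by
  refine ⟨Fin (Fintype.card K), inferInstance, fun _ => (Fintype.card K : ℝ)⁻¹,
    (Fintype.equivFin K).symm, fun _ => by positivity, fun f => ?_⟩
  rw [unif_apply, ← mul_sum, Equiv.sum_comp]

theorem le_card_mul_unif {f : K → ℝ} (h : ∀ b, 0 ≤ f b) (b : K) :
    f b ≤ Fintype.card K * unif K f := by
  rw [unif_apply, mul_inv_cancel_left₀ (by positivity)]
  exact single_le_sum (fun b _ => h b) (mem_univ b)

/-- The uniform mean on the words of length `n`. -/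
noncomputable def wordMean (K : Type*) [Fintype K] [Nonempty K] : ℕ → Mean (List K)
  | 0 => Mean.pure []
  | n + 1 => (unif K).bind fun b => (wordMean K n).map (b :: ·)

@[simp] theorem wordMean_zero (f : List K → ℝ) : wordMean K 0 f = f [] := rfl

theorem wordMean_succ (n : ℕ) (f : List K → ℝ) :
    wordMean K (n + 1) f = unif K (fun b => wordMean K n (fun x => f (b :: x))) := rfl

theorem isFinitary_wordMean (n : ℕ) : IsFinitary (wordMean K n) := by
  induction n with
  | zero => exact IsFinitary.pure _
  | succ n ih => exact isFinitary_unif.bind fun b => ih.map _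

theorem wordMean_add (m n : ℕ) (f : List K → ℝ) :
    wordMean K (m + n) f = wordMean K m (fun s => wordMean K n (fun t => f (s ++ t))) := by
  induction m generalizing f with
  | zero => simp
  | succ m ih => simp only [Nat.succ_add, wordMean_succ, ih, List.cons_append]

theorem wordMean_mono {n : ℕ} {f g : List K → ℝ} (h : ∀ x, x.length = n → f x ≤ g x) :
    wordMean K n f ≤ wordMean K n g := by
  induction n generalizing f g with
  | zero => exact h [] rfl
  | succ n ih =>
    simp only [wordMean_succ]
    exact isFinitary_unif.mono fun b => ih fun x hx => h _ (by simp [hx])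

theorem wordMean_congr {n : ℕ} {f g : List K → ℝ} (h : ∀ x, x.length = n → f x = g x) :
    wordMean K n f = wordMean K n g :=
  le_antisymm (wordMean_mono fun x hx => (h x hx).le) (wordMean_mono fun x hx => (h x hx).ge)

theorem wordMean_nonneg {n : ℕ} {f : List K → ℝ} (h : ∀ x, 0 ≤ f x) : 0 ≤ wordMean K n f :=
  (isFinitary_wordMean n).nonneg h

theorem le_card_pow_mul_wordMean {f : List K → ℝ} (h : ∀ x, 0 ≤ f x) (t : List K) :
    f t ≤ (Fintype.card K : ℝ) ^ t.length * wordMean K t.length f := by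
  induction t generalizing f with
  | nil => simp
  | cons b t ih =>
    calc f (b :: t)
      _ ≤ (Fintype.card K : ℝ) ^ t.length * wordMean K t.length (fun x => f (b :: x)) :=
        ih fun x => h _
      _ ≤ (Fintype.card K : ℝ) ^ t.length *
          (Fintype.card K * unif K fun b => wordMean K t.length fun x => f (b :: x)) := by
        gcongr
        exact le_card_mul_unif (f := fun b => wordMean K t.length fun x => f (b :: x))
          (fun b => wordMean_nonneg fun x => h _) b
      _ = (Fintype.card K : ℝ) ^ (b :: t).length * wordMean K (b :: t).length f := by
        rw [List.length_cons, wordMean_succ, pow_succ, mul_assoc]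

theorem wordMean_append_right_le {f : List K → ℝ} (h : ∀ x, 0 ≤ f x) (n : ℕ) (r : List K) :
    wordMean K n (fun x => f (x ++ r)) ≤
      (Fintype.card K : ℝ) ^ r.length * wordMean K (n + r.length) f := by
  rw [wordMean_add, ← (wordMean K n).apply_const_mul]
  exact (isFinitary_wordMean n).mono fun x => le_card_pow_mul_wordMean (fun t => h _) r

theorem wordMean_drop (q n : ℕ) (f : List K → ℝ) :
    wordMean K (q + n) (fun x => f (x.drop q)) = wordMean K n f := by
  rw [wordMean_add, wordMean_congr (g := fun _ => wordMean K n f), Mean.apply_const]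
  rintro x rfl
  simp

theorem wordMean_take (q n : ℕ) (f : List K → ℝ) :
    wordMean K (q + n) (fun x => f (x.take q)) = wordMean K q f := by
  rw [wordMean_add]
  refine wordMean_congr ?_
  rintro x rfl
  simp [Mean.apply_const]

/-- The mean of `m` independent uniform words of lengths `n 0, …, n (m - 1)`; the remaining
entries of the stream are empty. -/
noncomputable def blockMean (K : Type*) [Fintype K] [Nonempty K] :
    Stream' ℕ → ℕ → Mean (Stream' (List K))
  | _, 0 => Mean.pure (Stream'.const [])
  | n, m + 1 => (wordMean K n.head).bind fun x => (blockMean K n.tail m).map (Stream'.cons x)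

theorem blockMean_succ (n : Stream' ℕ) (m : ℕ) (f : Stream' (List K) → ℝ) :
    blockMean K n (m + 1) f =
      wordMean K n.head (fun x => blockMean K n.tail m (fun ω => f (Stream'.cons x ω))) := rfl

theorem isFinitary_blockMean (n : Stream' ℕ) (m : ℕ) : IsFinitary (blockMean K n m) := by
  induction m generalizing n with
  | zero => exact IsFinitary.pure _
  | succ m ih => exact (isFinitary_wordMean _).bind fun b => (ih _).map _

theorem blockMean_mono {n : Stream' ℕ} {m : ℕ} {f g : Stream' (List K) → ℝ}
    (h : ∀ ω : Stream' (List K), (∀ i < m, (ω.get i).length = n.get i) → f ω ≤ g ω) :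
    blockMean K n m f ≤ blockMean K n m g := by
  induction m generalizing n f g with
  | zero => exact h _ (by simp)
  | succ m ih =>
    simp only [blockMean_succ]
    refine wordMean_mono fun x hx => ih fun ω hω => h _ fun i hi => ?_
    cases i with
    | zero => exact hx
    | succ i => exact hω i (by lia)

end WordMean

/-! ### Carlson–Simpson trees -/

section Tree

variable {K L : Type*}

/-- Substitution of a letter for the variable `none`; the analogue of `subst` for an arbitrary
alphabet. -/
def instantiate (w : List (Option K)) (a : K) : List K := w.map fun o => o.getD a

@[simp] theorem instantiate_nil (a : K) : instantiate [] a = [] := rfl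

@[simp] theorem instantiate_cons (o : Option K) (w : List (Option K)) (a : K) :
    instantiate (o :: w) a = o.getD a :: instantiate w a := rfl

@[simp] theorem instantiate_append (w w' : List (Option K)) (a : K) :
    instantiate (w ++ w') a = instantiate w a ++ instantiate w' a := List.map_append

@[simp] theorem length_instantiate (w : List (Option K)) (a : K) :
    (instantiate w a).length = w.length := List.length_map _

@[simp] theorem instantiate_map_some (w : List K) (a : K) : instantiate (w.map some) a = w := by
  simp [instantiate, Function.comp_def]

theorem map_instantiate (p : K → L) (w : List (Option K)) (a : K) :
    (instantiate w a).map p = instantiate (w.map (Option.map p)) (p a) := by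
  simp only [instantiate, List.map_map]
  refine List.map_congr_left fun o _ => ?_
  cases o <;> rfl

/-- The word `t₀ ⌢ u₀(t₀) ⌢ t₁ ⌢ u₁(t₁) ⌢ ⋯`, obtained by substituting the letters of `t` in the
left variable words `none :: u₀, none :: u₁, …`. -/
def fill : Stream' (List (Option K)) → List K → List K
  | _, [] => []
  | u, b :: t => b :: (instantiate u.head b ++ fill u.tail t)

/-- The variant of `fill` that substitutes letters of the extended alphabet, so that
`none` is replaced by itself. -/
def fillVar : Stream' (List (Option K)) → List (Option K) → List (Option K)
  | _, [] => []
  | u, o :: t => o :: (u.head.map (fun p => p.or o) ++ fillVar u.tail t)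

@[simp] theorem fill_nil (u : Stream' (List (Option K))) : fill u [] = [] := rfl

@[simp] theorem fill_cons (u : Stream' (List (Option K))) (b : K) (t : List K) :
    fill u (b :: t) = b :: (instantiate u.head b ++ fill u.tail t) := rfl

theorem fill_append (u : Stream' (List (Option K))) (s t : List K) :
    fill u (s ++ t) = fill u s ++ fill (u.drop s.length) t := by
  induction s generalizing u with
  | nil => rfl
  | cons b s ih => simp [ih]

theorem fill_const_nil (t : List K) : fill (Stream'.const []) t = t := by
  induction t with
  | nil => rfl
  | cons b t ih => rw [fill_cons, Stream'.tail_const, ih]; rfl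

theorem map_fill (p : K → L) (u : Stream' (List (Option K))) (t : List K) :
    (fill u t).map p = fill (u.map (List.map (Option.map p))) (t.map p) := by
  induction t generalizing u with
  | nil => rfl
  | cons b t ih =>
    simp only [fill_cons, List.map_cons, List.map_append, ih, map_instantiate, Stream'.head_map,
      Stream'.tail_map]

theorem instantiate_fillVar (u : Stream' (List (Option K))) (t : List (Option K)) (a : K) :
    instantiate (fillVar u t) a = fill u (instantiate t a) := by
  induction t generalizing u with
  | nil => rfl
  | cons o t ih =>
    have hor : instantiate (u.head.map fun p => p.or o) a = instantiate u.head (o.getD a) := by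
      simp only [instantiate, List.map_map]
      refine List.map_congr_left fun p _ => ?_
      cases p <;> simp
    simp only [fillVar, instantiate_cons, instantiate_append, fill_cons, ih, hor]

theorem exists_length_fill_le (m : ℕ) (u : Stream' (List (Option K))) :
    ∃ B : ℕ, ∀ t : List K, t.length ≤ m → (fill u t).length ≤ B := by
  induction m generalizing u with
  | zero => exact ⟨0, fun t ht => by simp [List.length_eq_zero_iff.1 (Nat.le_zero.1 ht)]⟩
  | succ m ih =>
    obtain ⟨B, hB⟩ := ih u.tail
    refine ⟨1 + (u.head.length + B), fun t ht => ?_⟩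
    cases t with
    | nil => simp
    | cons b t =>
      have := hB t (by simpa using ht)
      simp only [fill_cons, List.length_cons, List.length_append, length_instantiate]
      lia

/-- The stream of variable words with `fill (compTails u u') = fill u ∘ fill u'`. -/
def compTails (u u' : Stream' (List (Option K))) : Stream' (List (Option K))
  | 0 => u.head ++ fillVar u.tail u'.head
  | j + 1 => compTails (u.tail.drop u'.head.length) u'.tail j

theorem fill_compTails (u u' : Stream' (List (Option K))) (t : List K) :
    fill (compTails u u') t = fill u (fill u' t) := by
  induction t generalizing u u' with
  | nil => rfl
  | cons b t ih =>
    have htail : (compTails u u').tail = compTails (u.tail.drop u'.head.length) u'.tail := rfl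
    have hhead : (compTails u u').head = u.head ++ fillVar u.tail u'.head := rfl
    simp only [fill_cons, htail, hhead, ih, fill_append, length_instantiate, instantiate_append,
      instantiate_fillVar, List.append_assoc]

variable (K) in
/-- A Carlson–Simpson tree: a root `c` and the left variable words `none :: u₀, none :: u₁, …`,
of which only the tails `uⱼ` are recorded. -/
structure CSTree where
  /-- The constant word `c`. -/
  root : List K
  /-- The variable words `uⱼ`, with their leading variable removed. -/
  tails : Stream' (List (Option K))

namespace CSTree

/-- The node `c ⌢ w₀(t₀) ⌢ w₁(t₁) ⌢ ⋯` of the tree with address `t`. -/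
def eval (V : CSTree K) (t : List K) : List K := V.root ++ fill V.tails t

@[simp] theorem eval_nil (V : CSTree K) : V.eval [] = V.root := by simp [eval]

theorem eval_singleton (V : CSTree K) (b : K) :
    V.eval [b] = V.root ++ b :: instantiate V.tails.head b := by simp [eval]

/-- The subtree of `V` whose nodes are the nodes of `V` with address in `V'`. -/
def comp (V V' : CSTree K) : CSTree K :=
  ⟨V.eval V'.root, compTails (V.tails.drop V'.root.length) V'.tails⟩

theorem eval_comp (V V' : CSTree K) (t : List K) : (V.comp V').eval t = V.eval (V'.eval t) := by
  simp [comp, eval, fill_compTails, fill_append]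

/-- The tree obtained by applying `p` to every letter. -/
def map (p : K → L) (V : CSTree K) : CSTree L :=
  ⟨V.root.map p, V.tails.map (List.map (Option.map p))⟩

theorem map_eval (p : K → L) (V : CSTree K) (t : List K) :
    (V.eval t).map p = (V.map p).eval (t.map p) := by
  simp [eval, map, map_fill]

theorem map_map_some (V : CSTree K) (a : K) :
    (V.map some).map (fun o : Option K => o.getD a) = V := by
  have hcomp : Option.map (fun o : Option K => o.getD a) ∘ Option.map some = id := by
    funext o; cases o <;> rfl
  have hstream : V.tails.map (List.map (Option.map fun o : Option K => o.getD a) ∘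
      List.map (Option.map some)) = V.tails := by
    rw [List.map_comp_map, hcomp, List.map_id_fun, Stream'.map_id]
  have hroot : (fun o : Option K => o.getD a) ∘ some = id := rfl
  simp only [map, List.map_map, Stream'.map_map, hstream, hroot, List.map_id]

/-- The tree of all words that extend `s`. -/
def prepend (s : List K) : CSTree K := ⟨s, Stream'.const []⟩

@[simp] theorem eval_prepend (s t : List K) : (prepend s).eval t = s ++ t := by
  simp [prepend, eval, fill_const_nil]

/-- The tree with nodes `ω₀ ⌢ t₀ ⌢ ω₁ ⌢ t₁ ⌢ ⋯ ⌢ ωₘ`, where the words `ωᵢ` are constant. -/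
def weave (ω : Stream' (List K)) : CSTree K := ⟨ω.head, ω.tail.map (List.map some)⟩

@[simp] theorem eval_weave_nil (ω : Stream' (List K)) : (weave ω).eval [] = ω.head := by
  simp [weave]

@[simp] theorem eval_weave_cons (ω : Stream' (List K)) (b : K) (t : List K) :
    (weave ω).eval (b :: t) = ω.head ++ b :: (weave ω.tail).eval t := by
  simp only [weave, eval, fill_cons, Stream'.head_map, Stream'.tail_map, instantiate_map_some]

theorem eval_weave_congr {ω ω' : Stream' (List K)} (t : List K)
    (h : ∀ i ≤ t.length, ω.get i = ω'.get i) : (weave ω).eval t = (weave ω').eval t := by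
  induction t generalizing ω ω' with
  | nil => rw [eval_weave_nil, eval_weave_nil]; exact h 0 le_rfl
  | cons b t ih =>
    rw [eval_weave_cons, eval_weave_cons,
      ih (ω := ω.tail) (ω' := ω'.tail) fun i hi => h (i + 1) (by simpa using hi)]
    congr 1
    exact h 0 (Nat.zero_le _)

/-- The set of nodes of the tree on its levels `0, …, m`. -/
def levels (V : CSTree K) (m : ℕ) : Set (List K) := V.eval '' {t | t.length ≤ m}

theorem levels_subset_iff {V : CSTree K} {m : ℕ} {X : Set (List K)} :
    V.levels m ⊆ X ↔ ∀ t : List K, t.length ≤ m → V.eval t ∈ X := Set.image_subset_iff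

theorem levels_mono (V : CSTree K) : Monotone V.levels :=
  fun _ _ h => Set.image_mono fun _ ht => le_trans ht h

theorem levels_subset_preimage {V V' : CSTree K} {m : ℕ} {X : Set (List K)} :
    V'.levels m ⊆ V.eval ⁻¹' X ↔ (V.comp V').levels m ⊆ X := by
  simp only [levels_subset_iff, Set.mem_preimage, eval_comp]

theorem levels_one_subset_iff {V : CSTree K} {X : Set (List K)} :
    V.levels 1 ⊆ X ↔ V.root ∈ X ∧ ∀ b, V.root ++ b :: instantiate V.tails.head b ∈ X := by
  simp only [levels_subset_iff, ← eval_singleton]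
  constructor
  · intro h
    exact ⟨by simpa using h [] (by simp), fun b => h [b] (by simp)⟩
  · rintro ⟨hroot, hchild⟩ t ht
    match t, ht with
    | [], _ => simpa using hroot
    | [b], _ => exact hchild b

end CSTree

/-- A random set of words that almost surely contains no tree of height `m`. -/
def TreeFree (m : ℕ) (E : Mean (Set (List K))) : Prop :=
  ∀ V : CSTree K, E (fun X => ind (V.levels m ⊆ X)) = 0

namespace TreeFree

variable {m : ℕ}

theorem map_preimage {E : Mean (Set (List K))} (h : TreeFree m E) (V : CSTree K) :
    TreeFree m (E.map (V.eval ⁻¹' ·)) := by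
  intro V'
  simpa only [Mean.map_apply, CSTree.levels_subset_preimage] using h _

theorem bind {T : Type*} (P : Mean T) {E : T → Mean (Set (List K))} (h : ∀ x, TreeFree m (E x)) :
    TreeFree m (P.bind E) := by
  intro V
  simp only [Mean.bind_apply, fun x => h x V, Mean.apply_const]

theorem map_cond {S : Type*} {E : Mean S} {X : S → Set (List K)} (h : TreeFree m (E.map X))
    {f : S → ℝ} (hf : IsBdd f) (hf0 : ∀ s, 0 ≤ f s) (hE : 0 < E f) :
    TreeFree m ((E.cond f hf hf0 hE).map X) :=
  fun V => E.cond_apply_eq_zero (hb := hf) (h0 := hf0) (hp := hE) (IsBdd.ind _)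
    (fun _ => ind_nonneg _) (h V)

theorem seqLimit {E : ℕ → Mean (Set (List K))} (h : ∀ n, TreeFree m (E n)) :
    TreeFree m (Mean.seqLimit E) := bind _ h

end TreeFree

end Tree

/-! ### Symmetrization -/

section Symmetrization

theorem exists_ultrafilter_le_eventually {α : Type*} {l : Filter α} {p : α → Prop}
    (h : ∃ᶠ x in l, p x) : ∃ U : Ultrafilter α, ↑U ≤ l ∧ ∀ᶠ x in U, p x := by
  obtain ⟨U, hU⟩ := exists_ultrafilter_iff.2 (frequently_mem_iff_neBot.1 h)
  exact ⟨U, hU.trans inf_le_left, le_principal_iff.1 (hU.trans inf_le_right)⟩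

variable {K : Type u} [Fintype K] [Nonempty K]

/-- The limit along `U` of the averages of `b` over the words of length `n` that extend `u`. -/
noncomputable def coneDensity (U : Ultrafilter ℕ) (b : List K → ℝ) (u : List K) : ℝ :=
  Mean.ofUltrafilter U fun n => wordMean K (n - u.length) fun t => b (u ++ t)

section coneDensity

variable {U : Ultrafilter ℕ} {b : List K → ℝ}

theorem isBdd_wordMean_append (hb : IsBdd b) (u : List K) (l : ℕ → ℕ) :
    IsBdd fun n => wordMean K (l n) fun t => b (u ++ t) :=
  Mean.isBdd_apply _ (hb.comp _)

theorem coneDensity_map_sub_prepend (hb : IsBdd b) (s u : List K) :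
    coneDensity (U.map fun n => n - s.length) (fun t => b (s ++ t)) u =
      coneDensity U b (s ++ u) := by
  rw [coneDensity, Mean.ofUltrafilter_map _ _ (isBdd_wordMean_append (hb.comp _) u _)]
  simp only [coneDensity, List.length_append, Nat.sub_sub, List.append_assoc]

theorem coneDensity_map_sub_wordMean (hb : IsBdd b) (n : ℕ) (c : K) (u : List K) :
    coneDensity (U.map fun k => k - (n + 1)) (fun u => wordMean K n fun x => b (x ++ c :: u)) u =
      wordMean K n fun x => coneDensity U b (x ++ c :: u) := by
  obtain ⟨C, hC⟩ := id hb
  have hb' : IsBdd fun u => wordMean K n fun x => b (x ++ c :: u) :=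
    ⟨C, fun u => (wordMean K n).abs_apply_le fun x => hC _⟩
  rw [coneDensity, Mean.ofUltrafilter_map _ _ (isBdd_wordMean_append hb' u _)]
  simp only [coneDensity, ← (isFinitary_wordMean n).comm]
  refine Mean.apply_congr _ fun k => ?_
  rw [(isFinitary_wordMean n).comm]
  refine wordMean_congr fun x hx => ?_
  have hk : k - (n + 1) - u.length = k - (x ++ c :: u).length := by
    simp only [List.length_append, List.length_cons]; lia
  simp only [hk, List.append_assoc, List.cons_append]

theorem coneDensity_nil_eq_wordMean (hU : ↑U ≤ (atTop : Filter ℕ)) (hb : IsBdd b) (n : ℕ) :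
    coneDensity U b [] = wordMean K n (coneDensity U b) := by
  obtain ⟨C, hC⟩ := id hb
  unfold coneDensity
  rw [← (isFinitary_wordMean n).comm]
  refine Mean.ofUltrafilter_congr U (isBdd_wordMean_append hb [] _)
    ⟨C, fun k => (wordMean K n).abs_apply_le fun x => (wordMean K _).abs_apply_le fun t => hC _⟩ ?_
  filter_upwards [hU (eventually_ge_atTop n)] with k hk
  obtain ⟨r, rfl⟩ := Nat.exists_eq_add_of_le hk
  rw [List.length_nil, Nat.sub_zero, wordMean_add]
  refine wordMean_congr fun x hx => ?_
  rw [hx, Nat.add_sub_cancel_left]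
  rfl

/-- An average that is nearly maximal forces every one of its terms to be nearly maximal. -/
theorem le_wordMean_coneDensity (hU : ↑U ≤ (atTop : Filter ℕ)) (hb : IsBdd b) {D η : ℝ}
    (hD : ∀ u, coneDensity U b u ≤ D) (h0 : D - η ≤ coneDensity U b []) (n : ℕ) (c : K) :
    D - Fintype.card K * η ≤ wordMean K n fun x => coneDensity U b (x ++ [c]) := by
  have hle : ∀ c, wordMean K n (fun x => coneDensity U b (x ++ [c])) ≤ D := fun c =>
    ((isFinitary_wordMean n).mono fun x => hD _).trans_eq (Mean.apply_const _ D)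
  have hmean : unif K (fun c => wordMean K n fun x => coneDensity U b (x ++ [c])) =
      coneDensity U b [] := by
    rw [coneDensity_nil_eq_wordMean hU hb (n + 1), wordMean_add, ← isFinitary_unif.comm]
    rfl
  have hdefect := le_card_mul_unif (fun c => sub_nonneg.2 (hle c)) c
  rw [Mean.apply_sub, Mean.apply_const, hmean] at hdefect
  have := mul_le_mul_of_nonneg_left (sub_le_comm.1 h0) (Nat.cast_nonneg (α := ℝ) (Fintype.card K))
  linarith

theorem bddAbove_range_coneDensity (hb : IsBdd b) : BddAbove (Set.range (coneDensity U b)) := by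
  obtain ⟨C, hC⟩ := hb
  refine ⟨C, ?_⟩
  rintro _ ⟨u, rfl⟩
  exact (le_abs_self _).trans
    ((Mean.ofUltrafilter U).abs_apply_le fun n => (wordMean K _).abs_apply_le fun t => hC _)

end coneDensity

theorem exists_le_blockMean_weave (m : ℕ) {ι : Type u} [Finite ι] {b : ι → List K → ℝ}
    (hb : ∀ i, IsBdd (b i)) {U : Ultrafilter ℕ} (hU : ↑U ≤ (atTop : Filter ℕ)) {D η ε : ℝ}
    (hε : 0 < ε) (hD : ∀ i u, coneDensity U (b i) u ≤ D)
    (h0 : ∀ i, D - η ≤ coneDensity U (b i) []) :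
    ∃ n : Stream' ℕ, ∀ i (t : List K), t.length < m →
      D - (Fintype.card K : ℝ) ^ m * η - ε ≤
        blockMean K n m fun ω => b i ((CSTree.weave ω).eval t) := by
  induction m generalizing ι b U η with
  | zero => exact ⟨Stream'.const 0, fun i t ht => absurd ht (Nat.not_lt_zero _)⟩
  | succ m ih =>
    obtain ⟨n₀, hn₀⟩ : ∃ n₀, ∀ i, D - η - ε < wordMean K n₀ (b i) := by
      refine (eventually_all.2 fun i => ?_ : ∀ᶠ n in U, ∀ i, D - η - ε < wordMean K n (b i)).exists
      exact Mean.eventually_lt_of_lt_ofUltrafilter U (isBdd_wordMean_append (hb i) [] _)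
        ((sub_lt_self _ hε).trans_le (h0 i))
    obtain ⟨n, hn⟩ := ih (ι := ι × K) (b := fun p u => wordMean K n₀ fun x => b p.1 (x ++ p.2 :: u))
      (U := U.map fun k => k - (n₀ + 1)) (η := Fintype.card K * η)
      (fun p => by
        obtain ⟨C, hC⟩ := hb p.1
        exact ⟨C, fun u => (wordMean K n₀).abs_apply_le fun x => hC _⟩)
      ((Filter.map_mono hU).trans (tendsto_sub_atTop_nat _))
      (fun p u => by
        rw [coneDensity_map_sub_wordMean (hb p.1)]
        exact ((isFinitary_wordMean n₀).mono fun x => hD _ _).trans_eq (Mean.apply_const _ D))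
      (fun p => by
        rw [coneDensity_map_sub_wordMean (hb p.1)]
        exact le_wordMean_coneDensity hU (hb p.1) (hD p.1) (h0 p.1) n₀ p.2)
    refine ⟨Stream'.cons n₀ n, fun i t ht => ?_⟩
    rw [blockMean_succ]
    cases t with
    | nil =>
      have hη : 0 ≤ η := by linarith [h0 i, hD i []]
      have hη' : η ≤ (Fintype.card K : ℝ) ^ (m + 1) * η :=
        le_mul_of_one_le_left hη (one_le_pow₀ (by exact_mod_cast Fintype.card_pos))
      simp only [CSTree.eval_weave_nil, Stream'.head_cons, Mean.apply_const]
      linarith [hn₀ i]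
    | cons c t =>
      simp only [CSTree.eval_weave_cons, Stream'.head_cons, Stream'.tail_cons]
      rw [← (isFinitary_wordMean n₀).comm]
      refine le_trans (le_of_eq ?_) (hn (i, c) t (by simpa using ht))
      ring

theorem exists_iSup_coneDensity_sub_le {b : List K → ℝ} (hb : IsBdd b) {U : Ultrafilter ℕ}
    (hU : ↑U ≤ (atTop : Filter ℕ)) (m : ℕ) {ε : ℝ} (hε : 0 < ε) :
    ∃ (s : List K) (n : Stream' ℕ), ∀ t : List K, t.length < m →
      (⨆ u, coneDensity U b u) - ε ≤
        blockMean K n m fun ω => b (((CSTree.prepend s).comp (CSTree.weave ω)).eval t) := by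
  set D := ⨆ u, coneDensity U b u
  have hle : ∀ u, coneDensity U b u ≤ D := le_ciSup (bddAbove_range_coneDensity hb)
  set q := (Fintype.card K : ℝ) ^ m
  have hq0 : 0 < q := by positivity
  obtain ⟨s, hs⟩ : ∃ s, D - ε / 2 / q < coneDensity U b s :=
    exists_lt_of_lt_ciSup (sub_lt_self D (by positivity))
  obtain ⟨n, hn⟩ := exists_le_blockMean_weave m (ι := PUnit) (b := fun _ t => b (s ++ t))
    (U := U.map fun n => n - s.length) (D := D) (fun _ => hb.comp _)
    ((Filter.map_mono hU).trans (tendsto_sub_atTop_nat _)) (half_pos hε)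
    (fun _ u => by rw [coneDensity_map_sub_prepend hb]; exact hle _)
    (fun _ => by rw [coneDensity_map_sub_prepend hb, List.append_nil]; exact hs.le)
  refine ⟨s, n, fun t ht => le_trans (le_of_eq ?_) (hn ⟨⟩ t ht) |>.trans_eq ?_⟩
  · rw [mul_div_cancel₀ _ hq0.ne']; ring
  · simp only [CSTree.eval_comp, CSTree.eval_prepend]

/-- Along random blocks of suitable lengths, above a node whose cone density is almost maximal, the
averages at all words of bounded length are almost maximal; `E'` is a limit of such averages. -/
theorem exists_mean_forall_le {S : Type*} {act : CSTree K → S → S} {a : List K → S → ℝ} {C : ℝ}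
    (ha : ∀ t s, |a t s| ≤ C) (hact : ∀ V t s, a t (act V s) = a (V.eval t) s) (E : Mean S) {δ : ℝ}
    (hE : ∃ᶠ n in atTop, δ ≤ wordMean K n fun t => E (a t)) :
    ∃ E' : Mean S, (∀ t, δ ≤ E' (a t)) ∧
      ∀ f : S → ℝ, (∀ V, E (fun s => f (act V s)) = 0) → E' f = 0 := by
  obtain ⟨U, hU, hUδ⟩ := exists_ultrafilter_le_eventually hE
  have hb : IsBdd fun t => E (a t) := ⟨C, fun t => E.abs_apply_le (ha t)⟩
  have hδ : δ ≤ ⨆ u, coneDensity U (fun t => E (a t)) u :=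
    (Mean.le_ofUltrafilter U (isBdd_wordMean_append hb [] _) hUδ).trans
      (le_ciSup (bddAbove_range_coneDensity hb) [])
  choose s n hsn using fun m : ℕ => exists_iSup_coneDensity_sub_le hb hU m
    (one_div_pos.2 m.cast_add_one_pos)
  refine ⟨Mean.seqLimit fun m => (blockMean K (n m) m).bind fun ω =>
    E.map (act ((CSTree.prepend (s m)).comp (CSTree.weave ω))), fun t => ?_, fun f hf => ?_⟩
  · refine Mean.le_seqLimit _ ⟨C, ha t⟩ tendsto_one_div_add_atTop_nhds_zero_nat ?_
    filter_upwards [eventually_gt_atTop t.length] with m hm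
    simp only [Mean.bind_apply, Mean.map_apply, hact]
    exact (sub_le_sub_right hδ _).trans (hsn m t hm)
  · exact Mean.seqLimit_apply_eq _ fun m => by
      simp only [Mean.bind_apply, Mean.map_apply, hf, Mean.apply_const]

end Symmetrization

/-! ### Lines and trees in dense random sets of words -/

theorem card_mul_sq_sub_le_one {S ι : Type*} (E : Mean S) (s : Finset ι) {p : ι → S → Prop}
    {δ η : ℝ} (hδ : 0 ≤ δ) (hη : 0 ≤ η) (hp : ∀ i ∈ s, δ ≤ E (fun x => ind (p i x)))
    (hpair : ∀ i ∈ s, ∀ j ∈ s, i ≠ j → E (fun x => ind (p i x ∧ p j x)) ≤ η) :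
    (#s : ℝ) * (δ ^ 2 - η) ≤ 1 := by
  classical
  have hfirst : (#s : ℝ) * δ ≤ E (fun x => ∑ i ∈ s, ind (p i x)) := by
    rw [E.apply_sum, ← nsmul_eq_mul]
    exact card_nsmul_le_sum _ _ _ hp
  have hsecond : E (fun x => (∑ i ∈ s, ind (p i x)) ^ 2) ≤ #s * (1 + #s * η) := by
    calc E (fun x => (∑ i ∈ s, ind (p i x)) ^ 2)
      _ = ∑ i ∈ s, ∑ j ∈ s, E (fun x => ind (p i x ∧ p j x)) := by
        simp only [ind_and, pow_two, sum_mul_sum, E.apply_sum]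
      _ ≤ ∑ i ∈ s, ∑ j ∈ s, ((if i = j then 1 else 0) + η) := by
        refine sum_le_sum fun i hi => sum_le_sum fun j hj => ?_
        split_ifs with hij
        · exact (E.apply_ind_le_one _).trans (le_add_of_nonneg_right hη)
        · rw [zero_add]; exact hpair i hi j hj hij
      _ = #s * (1 + #s * η) := by
        simp only [sum_add_distrib, sum_ite_eq, sum_ite_mem, inter_self, sum_const, nsmul_eq_mul]
        ring
  have hsq : (#s * δ) ^ 2 ≤ #s * (1 + #s * η) :=
    ((pow_le_pow_left₀ (by positivity) hfirst 2).trans (E.sq_apply_le (by fun_prop))).trans hsecond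
  rcases s.eq_empty_or_nonempty with rfl | hs
  · simp
  · have hs : (0 : ℝ) < #s := by exact_mod_cast hs.card_pos
    refine le_of_mul_le_mul_left ?_ hs
    linarith

/-- The density Hales–Jewett-like property on which the induction on the alphabet runs: a random
set of words that contains every word with probability at least `κ > 0` contains with positive
probability a word `c` together with all words `c ⌢ w(b)`, for some left variable word `w`. -/
def LineDensityProperty (K : Type u) : Prop :=
  ∀ (E : Mean (Set (List K))) (κ : ℝ), 0 < κ → TreeFree 1 E →
    ¬∀ t : List K, κ ≤ E (fun X => ind (t ∈ X))

theorem lineDensityProperty_of_unique (K : Type u) [Unique K] : LineDensityProperty K := by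
  intro E κ hκ hE h
  have hpair : ∀ i j : ℕ, i < j →
      E (fun X => ind (List.replicate i (default : K) ∈ X ∧ List.replicate j default ∈ X)) = 0 := by
    intro i j hij
    rw [← hE ⟨List.replicate i default, Stream'.const (List.replicate (j - i - 1) none)⟩]
    refine E.apply_congr fun X => ind_congr ?_
    have hj : ∀ b : K, List.replicate i default ++
        b :: instantiate (List.replicate (j - i - 1) none) b = List.replicate j default := fun b =>
      List.eq_replicate_iff.2 ⟨by simp; lia, fun _ _ => Subsingleton.elim _ _⟩
    rw [CSTree.levels_one_subset_iff]
    change _ ↔ _ ∧ ∀ b, List.replicate i default ++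
        b :: instantiate (List.replicate (j - i - 1) none) b ∈ X
    simp only [hj, forall_const]
  obtain ⟨r, hr⟩ := exists_nat_gt (1 / κ ^ 2)
  have hcard := card_mul_sq_sub_le_one E (range r) (p := fun i X => List.replicate i default ∈ X)
    hκ.le le_rfl (fun i _ => h _) fun i _ j _ hij => by
      rcases lt_or_gt_of_ne hij with hij | hij
      · exact (hpair i j hij).le
      · simp only [and_comm (a := List.replicate i default ∈ _)]
        exact (hpair j i hij).le
  rw [div_lt_iff₀ (by positivity)] at hr
  rw [card_range, sub_zero] at hcard
  exact absurd hcard (not_le.2 hr)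

section Dense

variable {K : Type u} [Fintype K] [Nonempty K]

/-- A random set of words contains, for infinitely many `n`, a proportion of at least `δ` of the
words of length `n` in expectation. -/
def FrequentlyDense (E : Mean (Set (List K))) (δ : ℝ) : Prop :=
  ∃ᶠ n in atTop, δ ≤ wordMean K n fun t => E fun X => ind (t ∈ X)

theorem frequentlyDense_of_forall_le {E : Mean (Set (List K))} {δ : ℝ}
    (h : ∀ t : List K, δ ≤ E (fun X => ind (t ∈ X))) : FrequentlyDense E δ :=
  Frequently.of_forall fun n =>
    ((wordMean K n).apply_const δ).symm.trans_le ((isFinitary_wordMean n).mono h)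

theorem FrequentlyDense.exists_forall_le {E : Mean (Set (List K))} {δ : ℝ} {m : ℕ}
    (h : FrequentlyDense E δ) (hE : TreeFree m E) :
    ∃ E' : Mean (Set (List K)), (∀ t, δ ≤ E' (fun X => ind (t ∈ X))) ∧ TreeFree m E' := by
  obtain ⟨E', hδ, hnull⟩ := exists_mean_forall_le (act := fun V X => V.eval ⁻¹' X)
    (a := fun t X => ind (t ∈ X)) (fun t X => abs_ind_le_one _) (fun V t s => rfl) E h
  refine ⟨E', hδ, fun V => hnull _ fun V' => ?_⟩
  simp only [CSTree.levels_subset_preimage]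
  exact hE _

theorem LineDensityProperty.exists_pos (hK : LineDensityProperty K) {E : Mean (Set (List K))}
    {δ : ℝ} (hδ : 0 < δ) (h : FrequentlyDense E δ) :
    ∃ V : CSTree K, 0 < E (fun X => ind (V.levels 1 ⊆ X)) := by
  by_contra! hnull
  obtain ⟨E', hpt, hfree⟩ := h.exists_forall_le (m := 1) fun V =>
    le_antisymm (hnull V) (E.apply_ind_nonneg _)
  exact hK E' δ hδ hfree hpt

/-- The probability that a uniform word of length `n` and its initial segment of length `l` both
belong to the random set `E`. -/
noncomputable def levelCorr (E : Mean (Set (List K))) (l n : ℕ) : ℝ :=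
  wordMean K l fun t => wordMean K (n - l) fun z => E fun X => ind (t ∈ X ∧ t ++ z ∈ X)

theorem isBdd_levelCorr (E : Mean (Set (List K))) (l : ℕ) : IsBdd (levelCorr E l) :=
  ⟨1, fun _ => (wordMean K l).abs_apply_le fun _ => (wordMean K _).abs_apply_le fun _ =>
    E.abs_apply_le fun _ => abs_ind_le_one _⟩

theorem wordMean_ind_take_mem_and (E : Mean (Set (List K))) {l l' N : ℕ} (hl : l ≤ l')
    (hN : l' ≤ N) :
    wordMean K N (fun y => E fun X => ind (y.take l ∈ X ∧ y.take l' ∈ X)) = levelCorr E l l' := by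
  obtain ⟨q, rfl⟩ := Nat.exists_eq_add_of_le hN
  obtain ⟨p, rfl⟩ := Nat.exists_eq_add_of_le hl
  have htake := wordMean_take (l + p) q fun t => E fun X => ind (t.take l ∈ X ∧ t ∈ X)
  simp only [List.take_take, Nat.min_eq_left hl] at htake
  rw [htake, wordMean_add, levelCorr, Nat.add_sub_cancel_left]
  refine wordMean_congr ?_
  rintro t rfl
  simp

theorem card_mul_sq_sub_le_one_of_levelCorr_le (E : Mean (Set (List K))) (s : Finset ℕ) {δ η : ℝ}
    (hδ : 0 ≤ δ) (hη : 0 ≤ η) (hdense : ∀ l ∈ s, δ ≤ wordMean K l fun t => E fun X => ind (t ∈ X))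
    (hcorr : ∀ l ∈ s, ∀ l' ∈ s, l < l' → levelCorr E l l' ≤ η) : (#s : ℝ) * (δ ^ 2 - η) ≤ 1 := by
  have hN : ∀ l ∈ s, l ≤ s.sup id := fun l hl => le_sup (f := id) hl
  refine card_mul_sq_sub_le_one ((wordMean K (s.sup id)).bind fun x => E.map (Prod.mk x)) s
    (p := fun l x => x.1.take l ∈ x.2) hδ hη (fun l hl => ?_) fun l hl l' hl' hne => ?_
  · obtain ⟨q, hq⟩ := Nat.exists_eq_add_of_le (hN l hl)
    rw [Mean.bind_apply, hq]
    exact (hdense l hl).trans_eq (wordMean_take l q fun t => E fun X => ind (t ∈ X)).symm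
  · simp only [Mean.bind_apply, Mean.map_apply]
    rcases lt_or_gt_of_ne hne with hll | hll
    · rw [wordMean_ind_take_mem_and E hll.le (hN l' hl')]
      exact hcorr l hl l' hl' hll
    · simp only [and_comm (a := List.take l _ ∈ _)]
      rw [wordMean_ind_take_mem_and E hll.le (hN l hl)]
      exact hcorr l' hl' l hl hll

theorem eventually_le_ofUltrafilter_levelCorr (E : Mean (Set (List K))) {δ : ℝ} (hδ : 0 < δ)
    {U : Ultrafilter ℕ} (hU : ↑U ≤ (atTop : Filter ℕ))
    (hdense : ∀ᶠ n in U, δ ≤ wordMean K n fun t => E fun X => ind (t ∈ X)) :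
    ∀ᶠ l in U, δ ^ 2 / 2 ≤ Mean.ofUltrafilter U (levelCorr E l) := by
  by_contra hc
  rw [← Ultrafilter.eventually_not] at hc
  simp only [not_le] at hc
  obtain ⟨l, hl, hlt⟩ := exists_seq_of_forall_finset_exists
    (fun l => (δ ≤ wordMean K l fun t => E fun X => ind (t ∈ X)) ∧
      Mean.ofUltrafilter U (levelCorr E l) < δ ^ 2 / 2)
    (fun l n => l < n ∧ levelCorr E l n < δ ^ 2 / 2) fun s hs => by
      refine ((hdense.and hc).and ((eventually_all_finset s).2 fun l hl => ?_)).exists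
      exact ((eventually_gt_atTop l).filter_mono hU).and
        (Mean.eventually_lt_of_ofUltrafilter_lt U (isBdd_levelCorr E l) (hs l hl).2)
  have hmono : StrictMono l := fun i j hij => (hlt i j hij).1
  obtain ⟨r, hr⟩ := exists_nat_gt (2 / δ ^ 2)
  have hcard := card_mul_sq_sub_le_one_of_levelCorr_le E ((range r).map ⟨l, hmono.injective⟩) hδ.le
    (η := δ ^ 2 / 2) (by positivity) (by simpa using fun i _ => (hl i).1)
    (by simpa using fun i _ j _ hij => (hlt i j (hmono.lt_iff_lt.1 hij)).2.le)
  rw [div_lt_iff₀ (by positivity)] at hr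
  rw [card_map, card_range] at hcard
  linarith

/-- The words `t` such that all the words `c ⌢ b ⌢ u(b) ⌢ t`, for `b` a letter, belong to `X`. -/
def lineQuotient (c : List K) (u : List (Option K)) (X : Set (List K)) : Set (List K) :=
  {t | ∀ b, c ++ b :: (instantiate u b ++ t) ∈ X}

/-- The words of `X` which stay in `X` when completed by the final segment of `y`. -/
def completable (y : List K) (X : Set (List K)) : Set (List K) :=
  {t | t ∈ X ∧ t ++ y.drop t.length ∈ X}

theorem frequentlyDense_completable {E : Mean (Set (List K))} {δ : ℝ} (hδ : 0 < δ)
    {U : Ultrafilter ℕ} (hU : ↑U ≤ (atTop : Filter ℕ))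
    (hdense : ∀ᶠ n in U, δ ≤ wordMean K n fun t => E fun X => ind (t ∈ X)) :
    FrequentlyDense ((Mean.ofUltrafilter U).bind fun n =>
      (wordMean K n).bind fun y => E.map (completable y)) (δ ^ 2 / 2) := by
  refine ((eventually_le_ofUltrafilter_levelCorr E hδ hU hdense).mono
    fun l hl => hl.trans_eq ?_).frequently.filter_mono hU
  simp only [Mean.bind_apply, Mean.map_apply]
  rw [← (isFinitary_wordMean l).comm]
  refine Mean.ofUltrafilter_congr U (isBdd_levelCorr E l)
    ⟨1, fun n => (wordMean K _).abs_apply_le fun _ => (wordMean K _).abs_apply_le fun _ =>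
      E.abs_apply_le fun _ => abs_ind_le_one _⟩ ?_
  filter_upwards [hU (eventually_ge_atTop l)] with n hn
  obtain ⟨q, rfl⟩ := Nat.exists_eq_add_of_le hn
  rw [levelCorr, Nat.add_sub_cancel_left]
  refine wordMean_congr ?_
  rintro t rfl
  exact (wordMean_drop t.length q fun z => E fun X => ind (t ∈ X ∧ t ++ z ∈ X)).symm

theorem LineDensityProperty.exists_frequently_lineQuotient (hK : LineDensityProperty K)
    {E : Mean (Set (List K))} {δ : ℝ} (hδ : 0 < δ) (h : FrequentlyDense E δ) :
    ∃ (c : List K) (u : List (Option K)) (δ' : ℝ), 0 < δ' ∧ ∃ᶠ n in atTop,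
      δ' ≤ wordMean K n fun t => E fun X => ind (c ∈ X ∧ t ∈ lineQuotient c u X) := by
  obtain ⟨U, hU, hdense⟩ := exists_ultrafilter_le_eventually h
  obtain ⟨V, hV⟩ := hK.exists_pos (by positivity) (frequentlyDense_completable hδ hU hdense)
  obtain ⟨γ, hγ0, hγ⟩ := exists_between hV
  refine ⟨V.root, V.tails.head, γ, hγ0, ?_⟩
  have hlarge := Mean.eventually_lt_of_lt_ofUltrafilter U (Mean.isBdd_apply
    (fun n => (wordMean K n).bind fun y => E.map (completable y)) (IsBdd.ind _)) hγ
  refine (tendsto_sub_atTop_nat (V.root.length + (1 + V.tails.head.length))).frequently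
    (Eventually.frequently ?_ |>.filter_mono hU)
  filter_upwards [hU (eventually_ge_atTop (V.root.length + (1 + V.tails.head.length))), hlarge]
    with n hn hn'
  obtain ⟨p, rfl⟩ := Nat.exists_eq_add_of_le hn
  rw [Nat.add_sub_cancel_left, ← wordMean_drop (V.root.length + (1 + V.tails.head.length)) p]
  refine hn'.le.trans ((isFinitary_wordMean _).mono fun y => E.apply_ind_mono fun X hX => ?_)
  rw [CSTree.levels_one_subset_iff] at hX
  refine ⟨hX.1.1, fun b => ?_⟩
  have hlen : (V.root ++ b :: instantiate V.tails.head b).length =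
      V.root.length + (1 + V.tails.head.length) := by
    simp only [List.length_append, List.length_cons, length_instantiate]; lia
  simpa only [hlen, List.append_assoc, List.cons_append] using (hX.2 b).2

end Dense

/-- The tree with root `c`, first left variable word `none :: u`, and continued by `V`. -/
def CSTree.cons {K : Type*} (c : List K) (u : List (Option K)) (V : CSTree K) : CSTree K :=
  ⟨c, Stream'.cons (u ++ V.root.map some) V.tails⟩

theorem CSTree.eval_cons_cons {K : Type*} (c : List K) (u : List (Option K)) (V : CSTree K) (b : K)
    (t : List K) : (CSTree.cons c u V).eval (b :: t) = c ++ b :: (instantiate u b ++ V.eval t) := by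
  simp [CSTree.cons, eval]

theorem CSTree.levels_cons_subset {K : Type*} {c : List K} {u : List (Option K)} {V : CSTree K}
    {m : ℕ} {X : Set (List K)} (hc : c ∈ X) (hV : V.levels m ⊆ lineQuotient c u X) :
    (CSTree.cons c u V).levels (m + 1) ⊆ X := by
  rw [levels_subset_iff] at hV ⊢
  rintro (_ | ⟨b, t⟩) ht
  · rw [eval_nil]; exact hc
  · rw [eval_cons_cons]
    exact hV t (by simpa using ht) b

namespace LineDensityProperty

variable {K : Type u} [Fintype K] [Nonempty K]

theorem exists_levels_pos (hK : LineDensityProperty K) (m : ℕ) {E : Mean (Set (List K))} {δ : ℝ}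
    (hδ : 0 < δ) (h : FrequentlyDense E δ) :
    ∃ V : CSTree K, 0 < E (fun X => ind (V.levels m ⊆ X)) := by
  induction m generalizing E δ with
  | zero =>
    obtain ⟨V, hV⟩ := hK.exists_pos hδ h
    exact ⟨V, hV.trans_le (E.apply_ind_mono fun X => (V.levels_mono (Nat.zero_le 1)).trans)⟩
  | succ m ih =>
    obtain ⟨c, u, δ', hδ', hf⟩ := hK.exists_frequently_lineQuotient hδ h
    have hc : 0 < E fun X => ind (c ∈ X) := by
      obtain ⟨n, hn⟩ := hf.exists
      refine hδ'.trans_le (hn.trans (((isFinitary_wordMean n).mono fun t =>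
        E.apply_ind_mono (q := fun X => c ∈ X) fun X hX => hX.1).trans_eq (Mean.apply_const _ _)))
    let E₁ := E.cond (fun X => ind (c ∈ X)) (IsBdd.ind _) (fun _ => ind_nonneg _) hc
    have hE₁ : ∀ p : Set (List K) → Prop,
        E (fun X => ind (c ∈ X ∧ p X)) = E (fun X => ind (c ∈ X)) * E₁ (fun X => ind (p X)) := by
      intro p
      simp only [ind_and, E₁, E.mul_cond_apply]
    have hdense : FrequentlyDense (E₁.map (lineQuotient c u)) δ' :=
      hf.mono fun n hn => hn.trans ((isFinitary_wordMean n).mono fun t => by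
        rw [hE₁, Mean.map_apply]
        exact mul_le_of_le_one_left (E₁.apply_ind_nonneg _) (E.apply_ind_le_one _))
    obtain ⟨V, hV⟩ := ih hδ' hdense
    refine ⟨CSTree.cons c u V, (mul_pos hc hV).trans_le ?_⟩
    rw [Mean.map_apply, ← hE₁]
    exact E.apply_ind_mono fun X hX => CSTree.levels_cons_subset hX.1 hX.2

/-- The tree is built one line at a time, keeping the quotient by the lines chosen so far dense. -/
theorem exists_tree_subset (hK : LineDensityProperty K) {A : Set (List K)} {δ : ℝ} (hδ : 0 < δ)
    (hA : ∃ᶠ n in atTop, δ ≤ wordMean K n fun t => ind (t ∈ A)) :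
    ∃ V : CSTree K, ∀ t, V.eval t ∈ A := by
  let Dense : Set (List K) → Prop := fun A =>
    ∃ δ > 0, ∃ᶠ n in atTop, δ ≤ wordMean K n fun t => ind (t ∈ A)
  have hline : ∀ A : {A // Dense A}, ∃ (c : List K) (u : List (Option K)),
      c ∈ A.1 ∧ Dense (lineQuotient c u A.1) := by
    rintro ⟨A, δ, hδ, h⟩
    obtain ⟨c, u, δ', hδ', hf⟩ := hK.exists_frequently_lineQuotient (E := Mean.pure A) hδ h
    simp only [Mean.pure_apply] at hf
    refine ⟨c, u, ?_, δ', hδ', hf.mono fun n hn =>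
      hn.trans ((isFinitary_wordMean n).mono fun t => ind_mono And.right)⟩
    by_contra hcA
    obtain ⟨n, hn⟩ := hf.exists
    simp only [ind_of_false (p := c ∈ A ∧ _) (fun h => hcA h.1), Mean.apply_const] at hn
    exact absurd hδ' (not_lt.2 hn)
  choose c u hc hu using hline
  let next : {A // Dense A} → {A // Dense A} := fun A => ⟨_, hu A⟩
  let V : {A // Dense A} → CSTree K := fun A =>
    ⟨c A, fun j => u (next^[j] A) ++ (c (next^[j + 1] A)).map some⟩
  have hV : ∀ A, V A = CSTree.cons (c A) (u A) (V (next A)) := by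
    intro A
    refine congrArg (CSTree.mk _) (funext fun j => ?_)
    cases j <;> rfl
  have hmem : ∀ (t : List K) (A : {A // Dense A}), (V A).eval t ∈ A.1 := by
    intro t
    induction t with
    | nil => intro A; rw [CSTree.eval_nil]; exact hc A
    | cons b t ih =>
      intro A
      rw [hV, CSTree.eval_cons_cons]
      exact ih (next A) b
  exact ⟨V ⟨A, δ, hδ, hA⟩, fun t => hmem t ⟨A, δ, hδ, hA⟩⟩

end LineDensityProperty

/-- Uniformity is obtained by compactness, passing to a limit of counterexamples. -/
theorem LineDensityProperty.exists_uniform_levels {K : Type u} [Finite K] [Nonempty K]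
    (hK : LineDensityProperty K) (m : ℕ) {κ : ℝ} (hκ : 0 < κ) :
    ∃ (M : ℕ) (π : ℝ), 0 < π ∧
      ∀ E : Mean (Set (List K)), (∀ t : List K, t.length ≤ M → κ ≤ E (fun X => ind (t ∈ X))) →
        ∃ V : CSTree K, (∀ t : List K, t.length ≤ m → (V.eval t).length ≤ M) ∧
          π ≤ E (fun X => ind (V.levels m ⊆ X)) := by
  have := Fintype.ofFinite K
  by_contra! hc
  choose E hdense hsmall using fun M : ℕ => hc M (1 / ((M : ℝ) + 1)) (by positivity)
  have hlim : ∀ t : List K, κ ≤ Mean.seqLimit E fun X => ind (t ∈ X) := fun t => by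
    refine Mean.le_seqLimit E (IsBdd.ind _) tendsto_const_nhds ?_
    filter_upwards [eventually_ge_atTop t.length] with M hM
    simpa using hdense M t hM
  obtain ⟨V, hV⟩ := hK.exists_levels_pos m hκ (frequentlyDense_of_forall_le hlim)
  obtain ⟨B, hB⟩ := exists_length_fill_le m V.tails
  refine absurd hV (not_lt.2 (Mean.seqLimit_le E (IsBdd.ind _)
    tendsto_one_div_add_atTop_nhds_zero_nat ?_))
  filter_upwards [eventually_ge_atTop (V.root.length + B)] with M hM
  rw [zero_add]
  refine (hsmall M V fun t ht => ?_).le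
  rw [CSTree.eval, List.length_append]
  exact (Nat.add_le_add_left (hB t ht) _).trans hM

/-! ### Line-free random sets of maximal density -/

section LineFree

variable {K : Type u} {δ : ℝ}

/-- The random set `E` contains no line, but it contains every word with probability at
least `δ`. -/
structure IsLineFree (δ : ℝ) (E : Mean (Set (List K))) : Prop where
  treeFree : TreeFree 1 E
  le_apply : ∀ t : List K, δ ≤ E fun X => ind (t ∈ X)

namespace IsLineFree

theorem map_preimage {E : Mean (Set (List K))} (h : IsLineFree δ E) (V : CSTree K) :
    IsLineFree δ (E.map (V.eval ⁻¹' ·)) :=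
  ⟨h.treeFree.map_preimage V, fun t => h.le_apply (V.eval t)⟩

theorem bind {T : Type*} (P : Mean T) {E : T → Mean (Set (List K))} (h : ∀ x, IsLineFree δ (E x)) :
    IsLineFree δ (P.bind E) :=
  ⟨TreeFree.bind P fun x => (h x).treeFree, fun t =>
    P.le_apply (Mean.isBdd_apply E (IsBdd.ind _)) fun x => (h x).le_apply t⟩

end IsLineFree

theorem exists_isLineFree_maximal (hK : ¬LineDensityProperty K) :
    ∃ δ > 0, (∃ E : Mean (Set (List K)), IsLineFree δ E) ∧
      ∀ (E : Mean (Set (List K))) (δ' : ℝ), IsLineFree δ' E → δ' ≤ δ := by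
  unfold LineDensityProperty at hK
  push Not at hK
  obtain ⟨E₀, κ, hκ, hfree, hdense⟩ := hK
  let D : Set ℝ := {δ | ∃ E : Mean (Set (List K)), IsLineFree δ E}
  have hbdd : BddAbove D := ⟨1, fun δ ⟨E, hE⟩ => (hE.le_apply []).trans (E.apply_ind_le_one _)⟩
  have hκD : κ ∈ D := ⟨E₀, hfree, hdense⟩
  choose δ hδD hδ using fun m : ℕ =>
    exists_lt_of_lt_csSup ⟨κ, hκD⟩ (sub_lt_self (sSup D) (m.one_div_pos_of_nat (α := ℝ)))
  choose E hE using hδD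
  exact ⟨sSup D, hκ.trans_le (le_csSup hbdd hκD),
    ⟨Mean.seqLimit E, TreeFree.seqLimit fun m => (hE m).treeFree, fun t =>
      Mean.le_seqLimit E (IsBdd.ind _) tendsto_one_div_add_atTop_nhds_zero_nat
        (Eventually.of_forall fun m => (hδ m).le.trans ((hE m).le_apply t))⟩,
    fun E δ' hE => le_csSup hbdd ⟨E, hE⟩⟩

variable [Fintype K] [Nonempty K]

theorem TreeFree.eventually_wordMean_le
    (hmax : ∀ (E : Mean (Set (List K))) (δ' : ℝ), IsLineFree δ' E → δ' ≤ δ)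
    {E : Mean (Set (List K))} (hE : TreeFree 1 E) {ε : ℝ} (hε : 0 < ε) :
    ∀ᶠ n in atTop, wordMean K n (fun t => E fun X => ind (t ∈ X)) ≤ δ + ε := by
  by_contra hc
  have hdense : FrequentlyDense E (δ + ε) := (not_eventually.1 hc).mono fun n hn => (not_le.1 hn).le
  obtain ⟨E', hE', hfree⟩ := hdense.exists_forall_le hE
  linarith [hmax E' _ ⟨hfree, hE'⟩]

end LineFree

/-! ### Lines in the directions of a smaller alphabet -/

theorem length_fillVar_le {K : Type*} (M : ℕ) (u : Stream' (List (Option K)))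
    (w : List (Option K)) (hw : w.length ≤ M) :
    (fillVar u w).length ≤ ∑ i ∈ range M, ((u.get i).length + 1) := by
  induction M generalizing u w with
  | zero => simp [List.length_eq_zero_iff.1 (Nat.le_zero.1 hw), fillVar]
  | succ M ih =>
    cases w with
    | nil => exact Nat.zero_le _
    | cons o w =>
      have := ih u.tail w (by simpa using hw)
      rw [sum_range_succ']
      simp only [Stream'.get_tail] at this
      simp only [fillVar, List.length_cons, List.length_append, List.length_map, Stream'.head]
      lia

section Subline

variable {α : Type u}

/-- The set `X` contains the root `[]` and the words `none :: x` with the letter `none` of the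
alphabet `Option α` regarded as the variable and replaced by any letter of `α`. -/
def HasSubline (x : List (Option α)) (X : Set (List (Option α))) : Prop :=
  [] ∈ X ∧ ∀ a : α, some a :: (instantiate x a).map some ∈ X

/-- The subtree of the words over `α` obtained from `xs` contains, within `X`, the line with root
`c` and variable word `none :: w`. -/
def HasSublineAt (xs : Stream' (List (Option α))) (c : List α) (w : List (Option α))
    (X : Set (List (Option α))) : Prop :=
  (fill xs c).map some ∈ X ∧ ∀ a, (fill xs (c ++ a :: instantiate w a)).map some ∈ X

variable [Fintype α]

/-- The probability that a uniform word of length `n` spans a subline in the random set `E`. -/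
noncomputable def sublineDensity (E : Mean (Set (List (Option α)))) (n : ℕ) : ℝ :=
  wordMean (Option α) n fun x => E fun X => ind (HasSubline x X)

theorem exists_forall_sublineDensity_lt {δ : ℝ}
    (hsparse : ∀ θ > 0, ∀ E : Mean (Set (List (Option α))), IsLineFree δ E →
      ∀ᶠ n in atTop, sublineDensity E n < θ) {θ : ℝ} (hθ : 0 < θ) (R : ℕ) :
    ∃ N : ℕ, ∀ E : Mean (Set (List (Option α))), IsLineFree δ E →
      ∃ n ≤ N, ∀ r ≤ R, sublineDensity E (n + r) < θ := by
  by_contra! hc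
  choose E hE hlarge using hc
  obtain ⟨n, hn⟩ := eventually_atTop.1
    (hsparse (θ / (R + 1)) (by positivity) (Mean.seqLimit E) (IsLineFree.bind _ hE))
  let f : Set (List (Option α)) → ℝ := fun X =>
    ∑ r ∈ range (R + 1), wordMean (Option α) (n + r) fun x => ind (HasSubline x X)
  have hf : IsBdd f := IsBdd.sum _ fun r =>
    ⟨1, fun X => (wordMean _ _).abs_apply_le fun _ => abs_ind_le_one _⟩
  have hEf : ∀ E : Mean (Set (List (Option α))),
      E f = ∑ r ∈ range (R + 1), sublineDensity E (n + r) := fun E => by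
    simp only [f, E.apply_sum, (isFinitary_wordMean _).comm, sublineDensity]
  have hlower : θ ≤ Mean.seqLimit E f := by
    refine Mean.le_seqLimit E hf tendsto_const_nhds ?_
    filter_upwards [eventually_ge_atTop n] with N hN
    obtain ⟨r, hr, hθr⟩ := hlarge N n hN
    rw [sub_zero, hEf]
    exact hθr.trans (single_le_sum (f := fun r => sublineDensity (E N) (n + r))
      (fun r _ => wordMean_nonneg fun x => (E N).apply_ind_nonneg _)
      (mem_range.2 (Nat.lt_succ_of_le hr)))
  have hupper : Mean.seqLimit E f < θ := by
    rw [hEf]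
    calc ∑ r ∈ range (R + 1), sublineDensity (Mean.seqLimit E) (n + r)
      _ < ∑ r ∈ range (R + 1), θ / (R + 1) :=
        sum_lt_sum_of_nonempty (by simp) fun r _ => hn _ (Nat.le_add_right n r)
      _ = θ := by rw [sum_const, card_range, nsmul_eq_mul]; push_cast; field_simp
  exact hlower.not_gt hupper

theorem wordMean_hasSublineAt_nil_le (E : Mean (Set (List (Option α)))) (n : ℕ)
    (ω : Stream' (List (Option α))) (w : List (Option α)) :
    wordMean (Option α) n (fun x => E fun X => ind (HasSublineAt (Stream'.cons x ω) [] w X)) ≤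
      (Fintype.card (Option α) : ℝ) ^ (fillVar ω w).length *
        sublineDensity E (n + (fillVar ω w).length) := by
  have hline : ∀ x X, HasSublineAt (Stream'.cons x ω) [] w X ↔ HasSubline (x ++ fillVar ω w) X := by
    simp [HasSublineAt, HasSubline, instantiate_fillVar]
  simp only [hline]
  exact wordMean_append_right_le (f := fun x => E fun X => ind (HasSubline x X))
    (fun x => E.apply_ind_nonneg _) n _

variable [Nonempty α]

/-- The random set `E` seen from the end of the word `none :: x`, with a uniform letter of `α`
in place of `none` and `x` uniform of length `n`. -/
noncomputable def sublineShift (E : Mean (Set (List (Option α)))) (n : ℕ) :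
    Mean (Set (List (Option α))) :=
  (unif α).bind fun a => (wordMean (Option α) n).bind fun x =>
    E.map ((CSTree.prepend (some a :: (instantiate x a).map some)).eval ⁻¹' ·)

theorem IsLineFree.sublineShift {E : Mean (Set (List (Option α)))} {δ : ℝ} (hE : IsLineFree δ E)
    (n : ℕ) : IsLineFree δ (sublineShift E n) :=
  bind _ fun _ => bind _ fun _ => hE.map_preimage _

theorem wordMean_hasSublineAt_cons_le (E : Mean (Set (List (Option α)))) (n : ℕ)
    (ω : Stream' (List (Option α))) (a : α) (c : List α) (w : List (Option α)) :
    wordMean (Option α) n (fun x => E fun X => ind (HasSublineAt (Stream'.cons x ω) (a :: c) w X)) ≤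
      Fintype.card α * sublineShift E n fun X => ind (HasSublineAt ω c w X) := by
  have hline : ∀ x X, HasSublineAt (Stream'.cons x ω) (a :: c) w X ↔ HasSublineAt ω c w
      ((CSTree.prepend (some a :: (instantiate x a).map some)).eval ⁻¹' X) := by
    simp [HasSublineAt]
  simp only [hline]
  exact le_card_mul_unif (f := fun a => wordMean (Option α) n fun x => E fun X =>
    ind (HasSublineAt ω c w ((CSTree.prepend (some a :: (instantiate x a).map some)).eval ⁻¹' X)))
    (fun a => wordMean_nonneg fun x => E.apply_ind_nonneg _) a

theorem exists_blockMean_hasSublineAt_le {δ : ℝ}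
    (hsparse : ∀ θ > 0, ∀ E : Mean (Set (List (Option α))), IsLineFree δ E →
      ∀ᶠ n in atTop, sublineDensity E n < θ) (M : ℕ) {τ : ℝ} (hτ : 0 < τ) :
    ∃ R : ℕ, ∀ E : Mean (Set (List (Option α))), IsLineFree δ E → ∃ n : Stream' ℕ,
      ∑ i ∈ range M, (n.get i + 1) ≤ R ∧
      ∀ (c : List α) (w : List (Option α)), c.length + 1 + w.length ≤ M →
        blockMean (Option α) n M (fun xs => E fun X => ind (HasSublineAt xs c w X)) ≤ τ := by
  induction M generalizing τ with
  | zero => exact ⟨0, fun E _ => ⟨Stream'.const 0, by simp, fun c w h => by lia⟩⟩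
  | succ M ih =>
    set q : ℝ := (Fintype.card (Option α) : ℝ)
    have hq : 1 ≤ q := Nat.one_le_cast.2 Fintype.card_pos
    obtain ⟨R, hR⟩ := ih (τ := τ / Fintype.card α) (by positivity)
    obtain ⟨N, hN⟩ := exists_forall_sublineDensity_lt hsparse (θ := τ / q ^ R) (by positivity) R
    refine ⟨N + 1 + R, fun E hE => ?_⟩
    obtain ⟨n₀, hn₀, hwindow⟩ := hN E hE
    obtain ⟨n, hn, hB⟩ := hR (sublineShift E n₀) (hE.sublineShift n₀)
    refine ⟨Stream'.cons n₀ n, ?_, fun c w hcw => ?_⟩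
    · rw [sum_range_succ']
      simp only [Stream'.get_succ_cons, Stream'.get_zero_cons]
      lia
    rw [blockMean_succ, Stream'.head_cons, Stream'.tail_cons, ← (isFinitary_wordMean n₀).comm]
    cases c with
    | nil =>
      rw [← (blockMean (Option α) n M).apply_const τ]
      refine blockMean_mono fun ω hω => (wordMean_hasSublineAt_nil_le E n₀ ω w).trans ?_
      have hlen : (fillVar ω w).length ≤ R := by
        refine (length_fillVar_le M ω w (by simp at hcw; lia)).trans (le_of_eq_of_le ?_ hn)
        exact sum_congr rfl fun i hi => by rw [hω i (mem_range.1 hi)]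
      calc q ^ (fillVar ω w).length * sublineDensity E (n₀ + (fillVar ω w).length)
        _ ≤ q ^ R * (τ / q ^ R) :=
          mul_le_mul (pow_le_pow_right₀ hq hlen) (hwindow _ hlen).le
            (wordMean_nonneg fun x => E.apply_ind_nonneg _) (by positivity)
        _ = τ := by field_simp
    | cons a c =>
      refine ((isFinitary_blockMean n M).mono fun ω =>
        wordMean_hasSublineAt_cons_le E n₀ ω a c w).trans ?_
      rw [Mean.apply_const_mul, ← le_div_iff₀' (by positivity)]
      exact hB c w (by simp only [List.length_cons] at hcw; lia)

theorem LineDensityProperty.exists_frequently_le_sublineDensity (hα : LineDensityProperty α)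
    {δ : ℝ} (hδ : 0 < δ) (hex : ∃ E : Mean (Set (List (Option α))), IsLineFree δ E) :
    ∃ θ > 0, ∃ E : Mean (Set (List (Option α))), IsLineFree δ E ∧
      ∃ᶠ n in atTop, θ ≤ sublineDensity E n := by
  by_contra! hsparse
  obtain ⟨M, π, hπ, huniform⟩ := hα.exists_uniform_levels 1 hδ
  obtain ⟨R, hR⟩ := exists_blockMean_hasSublineAt_le hsparse M (half_pos hπ)
  obtain ⟨E, hE⟩ := hex
  obtain ⟨n, -, hn⟩ := hR E hE
  obtain ⟨V, hVlen, hV⟩ := huniform ((blockMean (Option α) n M).bind fun xs =>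
    E.map fun X => {t | (fill xs t).map some ∈ X}) fun t _ =>
      ((blockMean (Option α) n M).apply_const δ).symm.trans_le
        ((isFinitary_blockMean n M).mono fun xs => hE.le_apply _)
  have hlen : V.root.length + 1 + V.tails.head.length ≤ M := by
    have := hVlen [Classical.arbitrary α] (by simp)
    simp only [CSTree.eval_singleton, List.length_append, List.length_cons, length_instantiate]
      at this
    lia
  simp only [Mean.bind_apply, Mean.map_apply, CSTree.levels_one_subset_iff] at hV
  linarith [hV.trans (hn V.root V.tails.head hlen)]

end Subline

/-! ### Resampling the letters identified with the variable -/

section Resample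

variable {α : Type u} {a b : α}

open Classical in
/-- The uniform mean on the letters `o` of the alphabet `Option α` with `o.getD a = b`. -/
noncomputable def resampleLetter (a b : α) : Mean (Option α) :=
  if b = a then (unif Bool).map fun t => if t then some a else none else Mean.pure (some b)

theorem resampleLetter_self (a : α) (f : Option α → ℝ) :
    resampleLetter a a f = (f (some a) + f none) / 2 := by
  simp only [resampleLetter, if_true, Mean.map_apply, unif_apply, Fintype.card_bool,
    Fintype.sum_bool, Bool.false_eq_true, if_false]
  push_cast
  ring

theorem resampleLetter_of_ne (h : b ≠ a) (f : Option α → ℝ) :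
    resampleLetter a b f = f (some b) := by
  simp [resampleLetter, h]

theorem isFinitary_resampleLetter (a b : α) : IsFinitary (resampleLetter a b) := by
  unfold resampleLetter
  split_ifs
  · exact isFinitary_unif.map _
  · exact IsFinitary.pure _

theorem resampleLetter_congr {f g : Option α → ℝ} (h : ∀ o : Option α, o.getD a = b → f o = g o) :
    resampleLetter a b f = resampleLetter a b g := by
  by_cases hb : b = a
  · subst hb
    rw [resampleLetter_self, resampleLetter_self, h (some b) rfl, h none rfl]
  · rw [resampleLetter_of_ne hb, resampleLetter_of_ne hb, h (some b) rfl]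

/-- The mean on the words `x` over `Option α` with `instantiate x a = u` whose letters are
resampled independently. -/
noncomputable def resample (a : α) : List α → Mean (List (Option α))
  | [] => Mean.pure []
  | b :: u => (resampleLetter a b).bind fun c => (resample a u).map (c :: ·)

@[simp] theorem resample_nil (f : List (Option α) → ℝ) : resample a [] f = f [] := rfl

theorem resample_cons (u : List α) (f : List (Option α) → ℝ) :
    resample a (b :: u) f = resampleLetter a b fun c => resample a u fun y => f (c :: y) := rfl

theorem isFinitary_resample (a : α) (u : List α) : IsFinitary (resample a u) := by
  induction u with
  | nil => exact IsFinitary.pure _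
  | cons b u ih => exact (isFinitary_resampleLetter a b).bind fun c => ih.map _

theorem resample_congr {u : List α} {f g : List (Option α) → ℝ}
    (h : ∀ y, instantiate y a = u → f y = g y) : resample a u f = resample a u g := by
  induction u generalizing f g with
  | nil => exact h [] rfl
  | cons b u ih =>
    rw [resample_cons, resample_cons]
    exact resampleLetter_congr fun o ho => ih fun y hy => h _ (by rw [instantiate_cons, ho, hy])

theorem resample_append (u v : List α) (f : List (Option α) → ℝ) :
    resample a (u ++ v) f = resample a u fun x => resample a v fun y => f (x ++ y) := by
  induction u generalizing f with
  | nil => rfl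
  | cons b u ih => simp only [List.cons_append, resample_cons, ih]

/-- The mean on the streams of words over `Option α` obtained by resampling independently the
first `m` words of a stream over `α`; the remaining entries are empty. -/
noncomputable def resampleBlocks (a : α) : Stream' (List α) → ℕ → Mean (Stream' (List (Option α)))
  | _, 0 => Mean.pure (Stream'.const [])
  | u, m + 1 => (resample a u.head).bind fun x => (resampleBlocks a u.tail m).map (Stream'.cons x)

theorem resampleBlocks_succ (u : Stream' (List α)) (m : ℕ) (f : Stream' (List (Option α)) → ℝ) :
    resampleBlocks a u (m + 1) f = resample a u.head fun x =>
      resampleBlocks a u.tail m fun ω => f (Stream'.cons x ω) := rfl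

theorem isFinitary_resampleBlocks (a : α) (u : Stream' (List α)) (m : ℕ) :
    IsFinitary (resampleBlocks a u m) := by
  induction m generalizing u with
  | zero => exact IsFinitary.pure _
  | succ m ih => exact (isFinitary_resample a _).bind fun c => (ih _).map _

theorem resampleBlocks_congr {u : Stream' (List α)} {m : ℕ} {f g : Stream' (List (Option α)) → ℝ}
    (h : ∀ ω : Stream' (List (Option α)), (∀ i < m, instantiate (ω.get i) a = u.get i) →
      f ω = g ω) : resampleBlocks a u m f = resampleBlocks a u m g := by
  induction m generalizing u f g with
  | zero => exact h _ (by simp)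
  | succ m ih =>
    rw [resampleBlocks_succ, resampleBlocks_succ]
    refine resample_congr fun x hx => ih fun ω hω => h _ fun i hi => ?_
    cases i with
    | zero => exact hx
    | succ i => exact hω i (by lia)

theorem resampleBlocks_eq_of_get_eq {u u' : Stream' (List α)} {m : ℕ}
    (h : ∀ i < m, u.get i = u'.get i) : resampleBlocks a u m = resampleBlocks a u' m := by
  induction m generalizing u u' with
  | zero => rfl
  | succ m ih =>
    have htail := ih (u := u.tail) (u' := u'.tail) fun i hi => h (i + 1) (by lia)
    have hhead : u.head = u'.head := h 0 (by lia)
    simp only [resampleBlocks, htail, hhead]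

/-- The function `G` on the nodes of the tree woven from `m` blocks, averaged over the resampling
of the blocks. -/
noncomputable def resampledWeave (a : α) (m : ℕ) (u : Stream' (List α)) (G : List (Option α) → ℝ)
    (t : List (Option α)) : ℝ :=
  resampleBlocks a u m fun ω => G ((CSTree.weave ω).eval t)

theorem resampledWeave_nil (m : ℕ) (u : Stream' (List α)) (G : List (Option α) → ℝ) :
    resampledWeave a (m + 1) u G [] = resample a u.head G := by
  simp only [resampledWeave, resampleBlocks_succ, CSTree.eval_weave_nil, Stream'.head_cons,
    Mean.apply_const]

theorem resampledWeave_cons (m : ℕ) (u : Stream' (List α)) (G : List (Option α) → ℝ)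
    (c : Option α) (t : List (Option α)) :
    resampledWeave a (m + 1) u G (c :: t) = resample a u.head fun z =>
      resampledWeave a m u.tail (fun y => G (z ++ c :: y)) t := by
  simp only [resampledWeave, resampleBlocks_succ, CSTree.eval_weave_cons, Stream'.head_cons,
    Stream'.tail_cons]

theorem abs_resampledWeave_le {G : List (Option α) → ℝ} {C : ℝ} (hG : ∀ x, |G x| ≤ C) (m : ℕ)
    (u : Stream' (List α)) (t : List (Option α)) : |resampledWeave a m u G t| ≤ C :=
  (resampleBlocks a u m).abs_apply_le fun _ => hG _

theorem resampledWeave_eq_of_get_eq {m : ℕ} {u u' : Stream' (List α)}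
    (h : ∀ i < m, u.get i = u'.get i) : resampledWeave a m u = resampledWeave a m u' := by
  unfold resampledWeave
  rw [resampleBlocks_eq_of_get_eq h]

theorem resample_resampledWeave {t : List α} {m : ℕ} (ht : t.length < m) (u : Stream' (List α))
    (G : List (Option α) → ℝ) :
    resample a t (resampledWeave a m u G) = resample a ((CSTree.weave u).eval t) G := by
  induction t generalizing m u G with
  | nil =>
    obtain ⟨m, rfl⟩ := Nat.exists_eq_add_one_of_ne_zero ht.ne_bot
    simp only [resample_nil, resampledWeave_nil, CSTree.eval_weave_nil]
  | cons b t ih =>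
    obtain ⟨m, rfl⟩ := Nat.exists_eq_add_one_of_ne_zero (Nat.ne_zero_of_lt ht)
    simp only [CSTree.eval_weave_cons, resample_append, resample_cons, resampledWeave_cons,
      (isFinitary_resample a u.head).comm]
    refine Mean.apply_congr _ fun z => Mean.apply_congr _ fun c => ?_
    exact ih (by simpa using ht) u.tail fun y => G (z ++ c :: y)

/-- The difference between the value of `resampledWeave` at `t` and its average over the resampling
of the letters of `t`. -/
noncomputable def resampledDeviation (a : α) (m : ℕ) (u : Stream' (List α))
    (G : List (Option α) → ℝ) (t : List (Option α)) : ℝ :=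
  resampledWeave a m u G t - resample a (instantiate t a) (resampledWeave a m u G)

theorem resampledWeave_eq_add_sub {t t' : List (Option α)} (h : instantiate t a = instantiate t' a)
    (m : ℕ) (u : Stream' (List α)) (G : List (Option α) → ℝ) :
    resampledWeave a m u G t =
      resampledWeave a m u G t' + resampledDeviation a m u G t - resampledDeviation a m u G t' := by
  rw [resampledDeviation, resampledDeviation, h]
  ring

theorem abs_resampledDeviation_le {G : List (Option α) → ℝ} {C : ℝ} (hG : ∀ x, |G x| ≤ C) (m : ℕ)
    (u : Stream' (List α)) (t : List (Option α)) : |resampledDeviation a m u G t| ≤ C + C :=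
  (abs_sub _ _).trans (add_le_add (abs_resampledWeave_le hG m u t)
    ((resample a _).abs_apply_le (abs_resampledWeave_le hG m u)))

theorem instantiate_eval (V : CSTree (Option α)) (x : List (Option α)) (a : α) :
    instantiate (V.eval x) a = (V.map fun o => o.getD a).eval (instantiate x a) :=
  CSTree.map_eval _ V x

theorem instantiate_eval_weave (ω : Stream' (List (Option α))) (t : List (Option α)) (a : α) :
    instantiate ((CSTree.weave ω).eval t) a =
      (CSTree.weave (ω.map (instantiate · a))).eval (instantiate t a) := by
  induction t generalizing ω with
  | nil => simp only [CSTree.eval_weave_nil, instantiate_nil, Stream'.head_map]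
  | cons c t ih =>
    simp only [CSTree.eval_weave_cons, instantiate_append, instantiate_cons, ih, Stream'.head_map,
      Stream'.tail_map]

variable [Fintype α]

theorem unif_resampleLetter (a : α) (f : Option α → ℝ) :
    unif (Option α) (fun o => resampleLetter a (o.getD a) f) = unif (Option α) f := by
  classical
  have hne : ∀ b ∈ univ.erase a, resampleLetter a b f = f (some b) := fun b hb =>
    resampleLetter_of_ne (ne_of_mem_erase hb) f
  simp only [unif_apply, Fintype.sum_option, Option.getD_none, Option.getD_some]
  rw [← add_sum_erase _ _ (mem_univ a), ← add_sum_erase _ (fun b => f (some b)) (mem_univ a),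
    sum_congr rfl hne, resampleLetter_self]
  ring

theorem wordMean_resample (a : α) (n : ℕ) (f : List (Option α) → ℝ) :
    wordMean (Option α) n (fun x => resample a (instantiate x a) f) = wordMean (Option α) n f := by
  induction n generalizing f with
  | zero => rfl
  | succ n ih =>
    simp only [wordMean_succ, instantiate_cons, resample_cons,
      (isFinitary_resampleLetter a _).comm, ih]
    exact unif_resampleLetter a fun c => wordMean (Option α) n fun y => f (c :: y)

theorem blockMean_resampleBlocks (a : α) (n : Stream' ℕ) (m : ℕ)
    (f : Stream' (List (Option α)) → ℝ) :
    blockMean (Option α) n m (fun ω => resampleBlocks a (ω.map (instantiate · a)) m f) =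
      blockMean (Option α) n m f := by
  induction m generalizing n f with
  | zero => rfl
  | succ m ih =>
    simp only [blockMean_succ, resampleBlocks_succ, Stream'.map_cons, Stream'.head_cons,
      Stream'.tail_cons, (isFinitary_resample a _).comm, ih]
    exact wordMean_resample a n.head fun z =>
      blockMean (Option α) n.tail m fun ω => f (Stream'.cons z ω)

theorem blockMean_mul_resampledWeave (a : α) (n : Stream' ℕ) (m : ℕ)
    {e : Stream' (List (Option α)) → ℝ}
    (he : ∀ ω ω', (∀ i < m, instantiate (ω.get i) a = instantiate (ω'.get i) a) → e ω = e ω')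
    (G : List (Option α) → ℝ) (t : List (Option α)) :
    blockMean (Option α) n m
        (fun ω => e ω * resampledWeave a m (ω.map (instantiate · a)) G t) =
      blockMean (Option α) n m fun ω => e ω * G ((CSTree.weave ω).eval t) := by
  rw [← blockMean_resampleBlocks a n m fun ω => e ω * G ((CSTree.weave ω).eval t)]
  refine Mean.apply_congr _ fun ω => ?_
  rw [resampledWeave, ← Mean.apply_const_mul]
  exact resampleBlocks_congr fun ω' hω' => by rw [he ω ω' fun i hi => (hω' i hi).symm]

theorem wordMean_sub_resample_sq (a : α) (n : ℕ) (H : List (Option α) → ℝ) :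
    wordMean (Option α) n (fun t => (H t - resample a (instantiate t a) H) ^ 2) =
      wordMean (Option α) n (fun t => H t ^ 2) -
        wordMean (Option α) n fun t => resample a (instantiate t a) H ^ 2 := by
  have hmul : wordMean (Option α) n (fun t => H t * resample a (instantiate t a) H) =
      wordMean (Option α) n fun t => resample a (instantiate t a) H ^ 2 := by
    rw [← wordMean_resample a n]
    refine Mean.apply_congr _ fun t => ?_
    rw [resample_congr (g := fun y => H y * resample a (instantiate t a) H)
      (fun y hy => by rw [hy]), Mean.apply_mul_const, sq]
  simp only [sub_sq, mul_assoc, Mean.apply_add, Mean.apply_sub, Mean.apply_const_mul, hmul]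
  ring

end Resample

/-! ### The energy of a function on words -/

section Energy

/-- The position of the `j`-th block in a word woven from blocks of lengths `n 0, n 1, …`. -/
def blockStart (n : Stream' ℕ) (j : ℕ) : ℕ := ∑ i ∈ range j, (n.get i + 1)

@[simp] theorem blockStart_zero (n : Stream' ℕ) : blockStart n 0 = 0 := rfl

theorem blockStart_succ (n : Stream' ℕ) (j : ℕ) :
    blockStart n (j + 1) = n.head + (blockStart n.tail j + 1) := by
  rw [blockStart, sum_range_succ', add_comm, add_assoc, add_comm 1]
  rfl

theorem wordMean_blockMean_eval_weave {K : Type*} [Fintype K] [Nonempty K] {j m : ℕ} (hj : j < m)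
    (n : Stream' ℕ) (H : List K → ℝ) :
    wordMean K j (fun t => blockMean K n m fun ω => H ((CSTree.weave ω).eval t)) =
      wordMean K (blockStart n j + n.get j) H := by
  induction j generalizing m n H with
  | zero =>
    obtain ⟨m, rfl⟩ := Nat.exists_eq_add_one_of_ne_zero (Nat.ne_zero_of_lt hj)
    simp only [wordMean_zero, blockMean_succ, CSTree.eval_weave_nil, Stream'.head_cons,
      Mean.apply_const, blockStart_zero, zero_add]
  | succ j ih =>
    obtain ⟨m, rfl⟩ := Nat.exists_eq_add_one_of_ne_zero (Nat.ne_zero_of_lt hj)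
    have hlen : blockStart n (j + 1) + n.get (j + 1) =
        n.head + (blockStart n.tail j + n.tail.get j + 1) := by
      rw [blockStart_succ, Stream'.get_tail]; ring
    simp only [hlen, wordMean_add n.head, wordMean_succ, blockMean_succ, CSTree.eval_weave_cons,
      Stream'.head_cons, Stream'.tail_cons, (isFinitary_wordMean n.head).comm]
    exact Mean.apply_congr _ fun z => Mean.apply_congr _ fun c =>
      ih (Nat.lt_of_succ_lt_succ hj) n.tail fun y => H (z ++ c :: y)

variable {α : Type u} [Fintype α]

/-- The mean square of `G` on words of length `p + h` after averaging over the resampling of the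
last `h` letters. -/
noncomputable def energy (a : α) (G : List (Option α) → ℝ) (p h : ℕ) : ℝ :=
  wordMean (Option α) p fun x => wordMean (Option α) h fun y =>
    resample a (instantiate y a) (fun z => G (x ++ z)) ^ 2

theorem abs_energy_le (a : α) {G : List (Option α) → ℝ} {C : ℝ} (hG : ∀ x, |G x| ≤ C) (p h : ℕ) :
    |energy a G p h| ≤ C ^ 2 :=
  (wordMean _ p).abs_apply_le fun _ => (wordMean _ h).abs_apply_le fun _ =>
    (abs_pow _ 2).trans_le
      (pow_le_pow_left₀ (abs_nonneg _) ((resample a _).abs_apply_le fun _ => hG _) 2)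

theorem wordMean_energy_append (a : α) (G : List (Option α) → ℝ) (p q h : ℕ) :
    wordMean (Option α) p (fun x => energy a (fun y => G (x ++ y)) q h) = energy a G (p + q) h := by
  simp only [energy, wordMean_add, List.append_assoc]

/-- The starting point `p` almost maximizes the limiting value of `F p (N - p)` as `N → ∞`. -/
theorem exists_forall_blockStart_le {F : ℕ → ℕ → ℝ} {C : ℝ} (hF : ∀ p h, |F p h| ≤ C) {ε : ℝ}
    (hε : 0 < ε) : ∃ (p : ℕ) (n : Stream' ℕ), ∀ j,
      F (p + blockStart n j) (n.get j) ≤ F p (blockStart n j + n.get j) + ε := by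
  let U : Mean ℕ := Mean.ofUltrafilter (hyperfilter ℕ)
  have hbdd : ∀ p, IsBdd fun N => F p (N - p) := fun p => ⟨C, fun N => hF _ _⟩
  have hlim : BddAbove (Set.range fun p => U fun N => F p (N - p)) := by
    refine ⟨C, ?_⟩
    rintro _ ⟨p, rfl⟩
    exact U.apply_le (hbdd p) fun N => (abs_le.1 (hF _ _)).2
  obtain ⟨_, ⟨p, rfl⟩, hp⟩ := exists_lt_of_lt_csSup (Set.range_nonempty _)
    (sub_lt_self (sSup (Set.range fun p => U fun N => F p (N - p))) hε)
  have hstep : ∀ q, ∃ h, F (p + q) h ≤ F p (q + h) + ε := by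
    intro q
    have hlt : U (fun N => F (p + q) (N - (p + q)) - F p (N - p)) < ε := by
      rw [U.apply_sub]
      linarith [le_csSup hlim ⟨p + q, rfl⟩]
    have hlt' := Mean.eventually_lt_of_ofUltrafilter_lt _ ((hbdd _).sub (hbdd _)) hlt
    obtain ⟨N, hN, hpq⟩ := (hlt'.and
      (Nat.hyperfilter_le_atTop (eventually_ge_atTop (p + q)))).exists
    refine ⟨N - (p + q), ?_⟩
    rw [show q + (N - (p + q)) = N - p by lia]
    linarith
  choose h hh using hstep
  let start : ℕ → ℕ := Nat.rec 0 fun _ q => q + (h q + 1)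
  have hstart : ∀ j, blockStart (fun j => h (start j)) j = start j := by
    intro j
    induction j with
    | zero => rfl
    | succ j ih => exact (sum_range_succ _ _).trans (congrArg (· + (h (start j) + 1)) ih)
  exact ⟨p, fun j => h (start j), fun j => by rw [hstart]; exact hh (start j)⟩

theorem blockMean_sq_resampledWeave_cons_le (a : α) (n : Stream' ℕ) (m : ℕ)
    (G : List (Option α) → ℝ) (c : Option α) (t : List (Option α)) :
    blockMean (Option α) n (m + 1) (fun ω =>
        resampledWeave a (m + 1) (ω.map (instantiate · a)) G (c :: t) ^ 2) ≤
      wordMean (Option α) n.head fun z => blockMean (Option α) n.tail m fun ω =>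
        resampledWeave a m (ω.map (instantiate · a)) (fun y => G (z ++ c :: y)) t ^ 2 := by
  rw [blockMean_succ]
  refine le_of_le_of_eq ((isFinitary_wordMean _).mono fun x => ?_) (wordMean_resample a n.head _)
  rw [← (isFinitary_resample a _).comm]
  refine (isFinitary_blockMean _ _).mono fun ω => ?_
  rw [resampledWeave_cons]
  exact (isFinitary_resample a _).sq_apply_le _

theorem wordMean_blockMean_sq_resampledWeave_le (a : α) {j m : ℕ} (hj : j < m) (n : Stream' ℕ)
    (G : List (Option α) → ℝ) :
    wordMean (Option α) j (fun t => blockMean (Option α) n m fun ω =>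
        resampledWeave a m (ω.map (instantiate · a)) G t ^ 2) ≤
      energy a G (blockStart n j) (n.get j) := by
  induction j generalizing m n G with
  | zero =>
    obtain ⟨m, rfl⟩ := Nat.exists_eq_add_one_of_ne_zero (Nat.ne_zero_of_lt hj)
    simp only [wordMean_zero, blockMean_succ, resampledWeave_nil, Stream'.map_cons,
      Stream'.head_cons, Mean.apply_const, energy, blockStart_zero, List.nil_append]
    exact le_rfl
  | succ j ih =>
    obtain ⟨m, rfl⟩ := Nat.exists_eq_add_one_of_ne_zero (Nat.ne_zero_of_lt hj)
    calc wordMean (Option α) (j + 1) (fun t => blockMean (Option α) n (m + 1) fun ω =>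
          resampledWeave a (m + 1) (ω.map (instantiate · a)) G t ^ 2)
      _ ≤ unif (Option α) fun c => wordMean (Option α) j fun t => wordMean (Option α) n.head
            fun z => blockMean (Option α) n.tail m fun ω =>
              resampledWeave a m (ω.map (instantiate · a)) (fun y => G (z ++ c :: y)) t ^ 2 :=
        isFinitary_unif.mono fun c => (isFinitary_wordMean j).mono fun t =>
          blockMean_sq_resampledWeave_cons_le a n m G c t
      _ = wordMean (Option α) n.head fun z => unif (Option α) fun c => wordMean (Option α) j
            fun t => blockMean (Option α) n.tail m fun ω =>
              resampledWeave a m (ω.map (instantiate · a)) (fun y => G (z ++ c :: y)) t ^ 2 := by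
        simp only [(isFinitary_wordMean n.head).comm]
      _ ≤ wordMean (Option α) n.head fun z => unif (Option α) fun c =>
            energy a (fun y => G (z ++ c :: y)) (blockStart n.tail j) (n.tail.get j) :=
        (isFinitary_wordMean _).mono fun z => isFinitary_unif.mono fun c =>
          ih (Nat.lt_of_succ_lt_succ hj) n.tail _
      _ = energy a G (blockStart n (j + 1)) (n.get (j + 1)) := by
        simp only [energy, blockStart_succ, wordMean_add n.head, wordMean_succ, List.append_assoc,
          List.cons_append, Stream'.get_tail]

theorem wordMean_blockMean_sq_resampledDeviation_le (a : α) {j m : ℕ} (hj : j < m) (n : Stream' ℕ)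
    (G : List (Option α) → ℝ) :
    wordMean (Option α) j (fun t => blockMean (Option α) n m fun ω =>
        resampledDeviation a m (ω.map (instantiate · a)) G t ^ 2) ≤
      energy a G (blockStart n j) (n.get j) - energy a G 0 (blockStart n j + n.get j) := by
  have hproj : wordMean (Option α) j (fun t => blockMean (Option α) n m fun ω =>
      resample a (instantiate t a) (resampledWeave a m (ω.map (instantiate · a)) G) ^ 2) =
        energy a G 0 (blockStart n j + n.get j) := by
    simp only [energy, wordMean_zero, List.nil_append]
    rw [← wordMean_blockMean_eval_weave hj n fun x => resample a (instantiate x a) G ^ 2]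
    refine wordMean_congr fun t ht => Mean.apply_congr _ fun ω => ?_
    rw [instantiate_eval_weave, resample_resampledWeave (by simpa [ht] using hj)]
  rw [← (isFinitary_wordMean j).comm]
  simp only [resampledDeviation, wordMean_sub_resample_sq]
  rw [Mean.apply_sub, (isFinitary_wordMean j).comm, (isFinitary_wordMean j).comm, hproj]
  exact sub_le_sub_right (wordMean_blockMean_sq_resampledWeave_le a hj n G) _

end Energy

/-! ### Correlation of a line-free set with a smaller alphabet -/

section Config

variable {α : Type u}

variable (α) in
/-- A set of words over `Option α` together with, for each letter `b` of `α`, a constraint on the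
words with `none` identified with `b`. -/
structure Config where
  /-- The set of words over `Option α`. -/
  base : Set (List (Option α))
  /-- The constraint for each letter. -/
  constraint : α → Set (List α)

namespace Config

/-- The configuration seen along a subtree. -/
def pullback (V : CSTree (Option α)) (s : Config α) : Config α :=
  ⟨V.eval ⁻¹' s.base, fun b => (V.map fun o => o.getD b).eval ⁻¹' s.constraint b⟩

/-- The difference between the indicator of `x ∈ s.base` and `ρ`, on the event that `x` satisfies
the constraints for the letters in `B`. -/
noncomputable def excess (ρ : ℝ) (B : Finset α) (x : List (Option α)) (s : Config α) : ℝ :=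
  (ind (x ∈ s.base) - ρ) * ∏ b ∈ B, ind (instantiate x b ∈ s.constraint b)

theorem excess_pullback (ρ : ℝ) (B : Finset α) (V : CSTree (Option α)) (x : List (Option α))
    (s : Config α) : excess ρ B x (pullback V s) = excess ρ B (V.eval x) s := by
  simp only [excess, pullback, Set.mem_preimage, instantiate_eval]

theorem excess_insert [DecidableEq α] (ρ : ℝ) {B : Finset α} {a : α} (ha : a ∉ B)
    (x : List (Option α)) (s : Config α) :
    excess ρ (insert a B) x s = ind (instantiate x a ∈ s.constraint a) * excess ρ B x s := by
  rw [excess, excess, prod_insert ha, mul_left_comm]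

theorem abs_excess_le (ρ : ℝ) (B : Finset α) (x : List (Option α)) (s : Config α) :
    |excess ρ B x s| ≤ 1 + |ρ| := by
  have hdiff : |ind (x ∈ s.base) - ρ| ≤ 1 + |ρ| :=
    (abs_sub _ _).trans (by gcongr; exact abs_ind_le_one _)
  have hprod : |∏ b ∈ B, ind (instantiate x b ∈ s.constraint b)| ≤ 1 := by
    rw [abs_prod]
    exact prod_le_one (fun b _ => abs_nonneg _) fun b _ => abs_ind_le_one _
  rw [excess, abs_mul]
  exact (mul_le_of_le_one_right (abs_nonneg _) hprod).trans hdiff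

/-- Some random configuration contains no line, while all its words have positive correlation with
the constraints for the letters in `B`, relative to the density `ρ`. -/
def HasExcess (B : Finset α) (ρ : ℝ) : Prop :=
  ∃ E : Mean (Config α), TreeFree 1 (E.map base) ∧ ∃ κ > 0, ∀ x, κ ≤ E (excess ρ B x)

/-- The configuration above the node `none` of `X`; its constraint for the letter `b` compares
membership of the word `some b :: u` in `X` with `b ∉ t`. -/
def ofChild (t : Finset α) (X : Set (List (Option α))) : Config α :=
  ⟨(CSTree.prepend [none]).eval ⁻¹' X, fun b => {u | some b :: u.map some ∈ X ↔ b ∉ t}⟩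

end Config

theorem TreeFree.apply_ind_hasSubline_mul {E : Mean (Set (List (Option α)))} (hE : TreeFree 1 E)
    (x : List (Option α)) : E (fun X => ind (HasSubline x X) * ind (none :: x ∈ X)) = 0 := by
  rw [← hE ⟨[], Stream'.const (x.map (Option.map some))⟩]
  have hnone : instantiate (x.map (Option.map some)) none = x := by
    simp only [instantiate, List.map_map]
    refine (List.map_congr_left fun o _ => ?_).trans (List.map_id x)
    cases o <;> rfl
  refine E.apply_congr fun X => ?_
  rw [← ind_and]
  refine ind_congr ?_
  simp only [CSTree.levels_one_subset_iff, HasSubline, List.nil_append, Option.forall,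
    Stream'.head, Stream'.get_const, hnone, map_instantiate]
  tauto

theorem one_sub_prod_ind [Fintype α] [DecidableEq α] (p : α → Prop) :
    1 - ∏ b, ind (p b) = ∑ t ∈ univ.erase (∅ : Finset α), ∏ b, ind (p b ↔ b ∉ t) := by
  have hsplit : ∀ t : Finset α,
      ∏ b, ind (p b ↔ b ∉ t) = (∏ b ∈ t, ind (¬p b)) * ∏ b ∈ univ \ t, ind (p b) := by
    intro t
    rw [← prod_sdiff (subset_univ t), mul_comm]
    congr 1
    · exact prod_congr rfl fun b hb => ind_congr (by simp [hb])
    · exact prod_congr rfl fun b hb => ind_congr (by simp [(mem_sdiff.1 hb).2])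
  have htotal : ∑ t : Finset α, (∏ b ∈ t, ind (¬p b)) * ∏ b ∈ univ \ t, ind (p b) = 1 := by
    rw [← powerset_univ, ← prod_add]
    exact prod_eq_one fun b _ => by rw [ind_not]; ring
  rw [← add_sum_erase _ _ (mem_univ ∅), prod_empty, sdiff_empty, one_mul] at htotal
  simp only [hsplit]
  linarith

theorem exists_frequently_le_of_sum {ι κ : Type*} {l : Filter κ} {T : Finset ι} {f : ι → κ → ℝ}
    {η : ℝ} (hη : 0 < η) (h : ∃ᶠ n in l, η ≤ ∑ t ∈ T, f t n) :
    ∃ t ∈ T, ∃ η' > 0, ∃ᶠ n in l, η' ≤ f t n := by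
  by_contra! hc
  have hsmall : ∀ᶠ n in l, ∀ t ∈ T, f t n < η / (#T + 1) :=
    (eventually_all_finset T).2 fun t ht => hc t ht _ (by positivity)
  obtain ⟨n, hn, hlt⟩ := (h.and_eventually hsmall).exists
  have hsum : ∑ t ∈ T, f t n ≤ #T * (η / (#T + 1)) :=
    (sum_le_card_nsmul T _ _ fun t ht => (hlt t ht).le).trans_eq (nsmul_eq_mul _ _)
  have : (#T : ℝ) * (η / (#T + 1)) < η := by
    rw [← mul_div_assoc, div_lt_iff₀ (by positivity)]
    linarith
  linarith

section Density

variable {K : Type u} [Fintype K] [Nonempty K] {δ ε : ℝ} {E : Mean (Set (List K))}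

theorem TreeFree.eventually_wordMean_ind_mul_le
    (hmax : ∀ (E : Mean (Set (List K))) (δ' : ℝ), IsLineFree δ' E → δ' ≤ δ) (hE : TreeFree 1 E)
    (hε : 0 < ε) (p : Set (List K) → Prop) (s : List K) :
    ∀ᶠ n in atTop, wordMean K n (fun x => E fun X => ind (p X) * ind (s ++ x ∈ X)) ≤
      E (fun X => ind (p X)) * δ + ε := by
  rcases (E.apply_ind_nonneg p).eq_or_lt with hp | hp
  · refine Eventually.of_forall fun n => ?_
    have hzero : ∀ x, E (fun X => ind (p X) * ind (s ++ x ∈ X)) = 0 := fun x =>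
      E.apply_eq_zero_of_le (fun X => mul_nonneg (ind_nonneg _) (ind_nonneg _)) (IsBdd.ind p)
        (fun X => mul_le_of_le_one_right (ind_nonneg _) (ind_le_one _)) hp.symm
    simp only [hzero, Mean.apply_const, ← hp, zero_mul, zero_add, hε.le]
  let E' := (E.cond _ (IsBdd.ind p) (fun X => ind_nonneg _) hp).map
    ((CSTree.prepend s).eval ⁻¹' ·)
  have hE' : TreeFree 1 E' := TreeFree.map_preimage (E := E.cond _ _ _ hp)
    (fun V => E.cond_apply_eq_zero (IsBdd.ind _) (fun _ => ind_nonneg _) (hE V)) _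
  filter_upwards [hE'.eventually_wordMean_le hmax hε] with n hn
  have hcond : ∀ x, E (fun X => ind (p X) * ind (s ++ x ∈ X)) =
      E (fun X => ind (p X)) * E' fun X => ind (x ∈ X) := fun x => by
    simp only [E', Mean.map_apply, Mean.mul_cond_apply, Set.mem_preimage, CSTree.eval_prepend]
  simp only [hcond, Mean.apply_const_mul]
  nlinarith [E.apply_ind_le_one p]

theorem IsLineFree.eventually_le_wordMean_ind_mul
    (hmax : ∀ (E : Mean (Set (List K))) (δ' : ℝ), IsLineFree δ' E → δ' ≤ δ) (hE : IsLineFree δ E)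
    (hε : 0 < ε) (p : Set (List K) → Prop) (s : List K) :
    ∀ᶠ n in atTop, E (fun X => ind (p X)) * δ - ε ≤
      wordMean K n (fun x => E fun X => ind (p X) * ind (s ++ x ∈ X)) := by
  filter_upwards [hE.treeFree.eventually_wordMean_ind_mul_le hmax hε (fun X => ¬p X) s] with n hn
  have hall : δ ≤ wordMean K n fun x => E fun X => ind (s ++ x ∈ X) :=
    ((wordMean K n).apply_const δ).symm.trans_le
      ((isFinitary_wordMean n).mono fun x => hE.le_apply (s ++ x))
  simp only [ind_not, sub_mul, one_mul, Mean.apply_sub, Mean.apply_const] at hn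
  linarith

end Density

section Excess

open Config

variable [Fintype α] {δ : ℝ} {E : Mean (Set (List (Option α)))}

theorem sum_excess_ofChild [DecidableEq α] (ρ : ℝ) (x : List (Option α))
    (X : Set (List (Option α))) :
    ∑ t ∈ univ.erase ∅, ind ([] ∈ X) * excess ρ univ x (ofChild t X) =
      ind ([] ∈ X) * ind (none :: x ∈ X) - ρ * ind ([] ∈ X) -
        ind (HasSubline x X) * ind (none :: x ∈ X) + ρ * ind (HasSubline x X) := by
  have hexcess : ∀ t : Finset α, excess ρ univ x (ofChild t X) = (ind (none :: x ∈ X) - ρ) *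
      ∏ b, ind (some b :: (instantiate x b).map some ∈ X ↔ b ∉ t) := fun t => by
    simp only [excess, ofChild, Set.mem_preimage, CSTree.eval_prepend, Set.mem_ofPred_eq]
    rfl
  simp only [hexcess, ← mul_sum, ← one_sub_prod_ind, HasSubline, ind_and, ind_forall]
  ring

theorem TreeFree.sum_wordMean_excess_ofChild [DecidableEq α] (hE : TreeFree 1 E) (ρ : ℝ) (n : ℕ) :
    ∑ t ∈ univ.erase ∅, wordMean (Option α) n
        (fun x => E fun X => ind ([] ∈ X) * excess ρ univ x (ofChild t X)) =
      wordMean (Option α) n (fun x => E fun X => ind ([] ∈ X) * ind (none :: x ∈ X)) -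
        ρ * E (fun X => ind ([] ∈ X)) + ρ * sublineDensity E n := by
  simp only [← Mean.apply_sum, sum_excess_ofChild, Mean.apply_add, Mean.apply_sub,
    Mean.apply_const_mul, hE.apply_ind_hasSubline_mul, Mean.apply_const, sub_zero, sublineDensity]

theorem IsLineFree.exists_frequently_le_excess (hδ : 0 < δ)
    (hmax : ∀ (E : Mean (Set (List (Option α)))) (δ' : ℝ), IsLineFree δ' E → δ' ≤ δ)
    (hE : IsLineFree δ E) {θ : ℝ} (hθ : 0 < θ) (hfreq : ∃ᶠ n in atTop, θ ≤ sublineDensity E n) :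
    ∃ ρ > δ, ∃ t : Finset α, ∃ η > 0, ∃ᶠ n in atTop, η ≤ wordMean (Option α) n
      fun x => E fun X => ind ([] ∈ X) * excess ρ univ x (ofChild t X) := by
  classical
  have hγ : 0 < δ * θ / 4 := by positivity
  refine ⟨δ + δ * θ / 4, by linarith, ?_⟩
  have hq : E (fun X => ind ([] ∈ X)) ≤ 1 := E.apply_ind_le_one _
  have hsum : ∃ᶠ n in atTop, δ * θ / 2 ≤ ∑ t ∈ univ.erase ∅, wordMean (Option α) n
      fun x => E fun X => ind ([] ∈ X) * excess (δ + δ * θ / 4) univ x (ofChild t X) := by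
    have hlarge := hE.eventually_le_wordMean_ind_mul hmax hγ ([] ∈ ·) [none]
    refine (hfreq.and_eventually hlarge).mono ?_
    rintro n ⟨hsubline, hlower⟩
    rw [hE.treeFree.sum_wordMean_excess_ofChild]
    simp only [List.singleton_append] at hlower
    nlinarith
  obtain ⟨t, -, η, hη, hfreq⟩ := exists_frequently_le_of_sum (by positivity) hsum
  exact ⟨t, η, hη, hfreq⟩

theorem IsLineFree.exists_hasExcess (hδ : 0 < δ)
    (hmax : ∀ (E : Mean (Set (List (Option α)))) (δ' : ℝ), IsLineFree δ' E → δ' ≤ δ)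
    (hE : IsLineFree δ E) {θ : ℝ} (hθ : 0 < θ) (hfreq : ∃ᶠ n in atTop, θ ≤ sublineDensity E n) :
    ∃ ρ > δ, HasExcess (univ : Finset α) ρ := by
  obtain ⟨ρ, hρ, t, η, hη, hfreq⟩ := hE.exists_frequently_le_excess hδ hmax hθ hfreq
  have hq : 0 < E fun X => ind ([] ∈ X) := hδ.trans_le (hE.le_apply [])
  let E₁ : Mean (Set (List (Option α))) := E.cond _ (IsBdd.ind _) (fun X => ind_nonneg _) hq
  have hE₁ : TreeFree 1 E₁ := fun V =>
    E.cond_apply_eq_zero (IsBdd.ind _) (fun _ => ind_nonneg _) (hE.treeFree V)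
  have hE₁freq : ∃ᶠ n in atTop, η ≤ wordMean (Option α) n
      fun x => E₁.map (ofChild t) (excess ρ univ x) := by
    refine hfreq.mono fun n hn => hn.trans ?_
    simp only [← E.mul_cond_apply (hb := IsBdd.ind _) (h0 := fun _ => ind_nonneg _) (hp := hq),
      Mean.apply_const_mul] at hn ⊢
    exact mul_le_of_le_one_left
      (nonneg_of_mul_nonneg_right (hη.le.trans hn) hq) (E.apply_ind_le_one _)
  obtain ⟨E', hE', hnull⟩ := exists_mean_forall_le (abs_excess_le ρ univ)
    (fun V x s => excess_pullback ρ univ V x s) (E₁.map (ofChild t)) hE₁freq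
  exact ⟨ρ, hρ, E', fun V => hnull _ fun V' =>
    (hE₁.map_preimage (CSTree.prepend [none])).map_preimage V' V, η, hη, hE'⟩

end Excess

end Config

/-! ### Removing the constraints -/

section Removal

variable {α : Type u}

namespace Config

/-- The words `t` at which averaging `excess ρ B` over the resampling of the first `m` blocks `r.1`
gives at least `c`. -/
def favorable (a : α) (ρ : ℝ) (B : Finset α) (m : ℕ) (c : ℝ)
    (r : Stream' (List (Option α)) × Config α) : Set (List α) :=
  {t | c ≤ resampledWeave a m (r.1.map (instantiate · a)) (excess ρ B · r.2) (t.map some)}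

variable {a : α} {ρ : ℝ} {B : Finset α} {m : ℕ} {κ c : ℝ} {E : Mean (Config α)}

theorem isBdd_excess (ρ : ℝ) (B : Finset α) (x : List (Option α)) : IsBdd (excess ρ B x) :=
  ⟨1 + |ρ|, abs_excess_le ρ B x⟩

theorem isBdd_resampledWeave_excess (a : α) (ρ : ℝ) (B : Finset α) (m : ℕ)
    (t : List (Option α)) : IsBdd fun r : Stream' (List (Option α)) × Config α =>
      resampledWeave a m (r.1.map (instantiate · a)) (excess ρ B · r.2) t :=
  ⟨1 + |ρ|, fun r => abs_resampledWeave_le (fun x => abs_excess_le ρ B x r.2) m _ t⟩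

theorem isBdd_resampledDeviation_excess (a : α) (ρ : ℝ) (B : Finset α) (m : ℕ)
    (t : List (Option α)) : IsBdd fun r : Stream' (List (Option α)) × Config α =>
      resampledDeviation a m (r.1.map (instantiate · a)) (excess ρ B · r.2) t :=
  ⟨_, fun r => abs_resampledDeviation_le (fun x => abs_excess_le ρ B x r.2) m _ t⟩

theorem favorable_congr (a : α) (ρ : ℝ) (B : Finset α) {ω ω' : Stream' (List (Option α))}
    (h : ∀ i < m, instantiate (ω.get i) a = instantiate (ω'.get i) a) (c : ℝ) (s : Config α) :
    favorable a ρ B m c (ω, s) = favorable a ρ B m c (ω', s) := by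
  have hweave : resampledWeave a m (ω.map (instantiate · a)) =
      resampledWeave a m (ω'.map (instantiate · a)) := resampledWeave_eq_of_get_eq h
  simp only [favorable, hweave]

/-- Resampling does not change whether the constraint for `a` holds, so where the average is nonzero
the constraint must hold already. -/
theorem instantiate_eval_weave_mem_of_favorable [DecidableEq α] (ha : a ∉ B) (hc : 0 < c)
    {ω : Stream' (List (Option α))} {s : Config α} {y : List (Option α)} (hy : y.length < m)
    (h : instantiate y a ∈ favorable a ρ (insert a B) m c (ω, s)) :
    instantiate ((CSTree.weave ω).eval y) a ∈ s.constraint a := by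
  by_contra hs
  have hzero : resampledWeave a m (ω.map (instantiate · a)) (excess ρ (insert a B) · s)
      ((instantiate y a).map some) = 0 := by
    rw [resampledWeave, ← Mean.apply_const (resampleBlocks a (ω.map (instantiate · a)) m) 0]
    refine resampleBlocks_congr fun ω' hω' => ?_
    rw [instantiate_eval_weave] at hs
    have heval : (CSTree.weave (ω'.map (instantiate · a))).eval (instantiate y a) =
        (CSTree.weave (ω.map (instantiate · a))).eval (instantiate y a) :=
      CSTree.eval_weave_congr _ fun i hi =>
        hω' i (hi.trans_lt (by rwa [length_instantiate]))
    rw [excess_insert ρ ha, instantiate_eval_weave, instantiate_map_some, heval, ind_of_false hs,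
      zero_mul]
  exact absurd hc (not_lt.2 (h.trans_eq hzero))

theorem HasExcess.exists_isLineFree (h : HasExcess (∅ : Finset α) ρ) :
    ∃ E : Mean (Set (List (Option α))), ∃ δ > ρ, IsLineFree δ E := by
  obtain ⟨E, hE, κ, hκ, hexcess⟩ := h
  refine ⟨E.map base, ρ + κ, by linarith, hE, fun t => ?_⟩
  have ht := hexcess t
  have hexcess_eq : excess ρ (∅ : Finset α) t = fun s => ind (t ∈ s.base) - ρ := by
    ext s
    rw [excess, prod_empty, mul_one]
  rw [hexcess_eq, Mean.apply_sub, Mean.apply_const] at ht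
  change ρ + κ ≤ E fun s => ind (t ∈ s.base)
  linarith

section Fintype

variable [Fintype α]

theorem prod_sq_resampledDeviation_le (a : α) {S : Type v} {φ : List (Option α) → S → ℝ} {C : ℝ}
    (hφ : ∀ x s, |φ x s| ≤ C) (E : Mean S) {n : Stream' ℕ} {ε : ℝ}
    (hn : ∀ j, E (fun s => energy a (φ · s) (blockStart n j) (n.get j)) ≤
      E (fun s => energy a (φ · s) 0 (blockStart n j + n.get j)) + ε)
    {m : ℕ} {t : List (Option α)} (ht : t.length < m) :
    ((blockMean (Option α) n m).prod E)
        (fun r => resampledDeviation a m (r.1.map (instantiate · a)) (φ · r.2) t ^ 2) ≤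
      (Fintype.card (Option α) : ℝ) ^ t.length * ε := by
  let D : List (Option α) → Stream' (List (Option α)) → S → ℝ := fun t ω s =>
    resampledDeviation a m (ω.map (instantiate · a)) (φ · s) t ^ 2
  have hD : ∀ t ω s, |D t ω s| ≤ (C + C) ^ 2 := fun t ω s => (abs_pow _ 2).trans_le
    (pow_le_pow_left₀ (abs_nonneg _) (abs_resampledDeviation_le (fun x => hφ x s) m _ t) 2)
  have hblock : ∀ t s, |blockMean (Option α) n m fun ω => D t ω s| ≤ (C + C) ^ 2 := fun t s =>
    (blockMean (Option α) n m).abs_apply_le fun ω => hD t ω s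
  have hnonneg : ∀ t, 0 ≤ E fun s => blockMean (Option α) n m fun ω => D t ω s := fun t =>
    E.apply_nonneg ⟨_, hblock t⟩ fun s => (isFinitary_blockMean n m).nonneg fun ω => sq_nonneg _
  have henergy : ∀ p h, IsBdd fun s => energy a (φ · s) p h := fun p h =>
    ⟨C ^ 2, fun s => abs_energy_le a (fun x => hφ x s) p h⟩
  have hmean : wordMean (Option α) t.length
      (fun t => E fun s => blockMean (Option α) n m fun ω => D t ω s) ≤ ε := by
    rw [← (isFinitary_wordMean t.length).comm]
    refine (E.apply_mono ⟨_, fun s => (wordMean _ _).abs_apply_le fun t => hblock t s⟩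
      ((henergy _ _).sub (henergy _ _)) fun s =>
        wordMean_blockMean_sq_resampledDeviation_le a ht n (φ · s)).trans ?_
    rw [E.apply_sub]
    linarith [hn t.length]
  calc ((blockMean (Option α) n m).prod E) (fun r => D t r.1 r.2)
    _ = E fun s => blockMean (Option α) n m fun ω => D t ω s :=
      ((isFinitary_blockMean n m).comm E _).symm
    _ ≤ (Fintype.card (Option α) : ℝ) ^ t.length * wordMean (Option α) t.length
          (fun t => E fun s => blockMean (Option α) n m fun ω => D t ω s) :=
      le_card_pow_mul_wordMean hnonneg t
    _ ≤ (Fintype.card (Option α) : ℝ) ^ t.length * ε := by gcongr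

theorem exists_mean_energy_le (a : α) (hE : TreeFree 1 (E.map base))
    (hκ : ∀ x, κ ≤ E (excess ρ B x)) {ε : ℝ} (hε : 0 < ε) :
    ∃ (E₀ : Mean (Config α)) (n : Stream' ℕ), TreeFree 1 (E₀.map base) ∧
      (∀ x, κ ≤ E₀ (excess ρ B x)) ∧
      ∀ j, E₀ (fun s => energy a (excess ρ B · s) (blockStart n j) (n.get j)) ≤
        E₀ (fun s => energy a (excess ρ B · s) 0 (blockStart n j + n.get j)) + ε := by
  obtain ⟨p, n, hn⟩ := exists_forall_blockStart_le
    (F := fun p h => E fun s => energy a (excess ρ B · s) p h)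
    (fun p h => E.abs_apply_le fun s => abs_energy_le a (fun x => abs_excess_le ρ B x s) p h) hε
  let E₀ : Mean (Config α) :=
    (wordMean (Option α) p).bind fun x => E.map (pullback (CSTree.prepend x))
  have henergy : ∀ q h, E₀ (fun s => energy a (excess ρ B · s) q h) =
      E fun s => energy a (excess ρ B · s) (p + q) h := fun q h => by
    simp only [E₀, Mean.bind_apply, Mean.map_apply, excess_pullback, CSTree.eval_prepend]
    rw [← (isFinitary_wordMean p).comm]
    exact E.apply_congr fun s => wordMean_energy_append a (excess ρ B · s) p q h
  refine ⟨E₀, n, TreeFree.bind _ fun x => hE.map_preimage (CSTree.prepend x), fun x => ?_,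
    fun j => ?_⟩
  · refine ((wordMean (Option α) p).apply_const κ).symm.trans_le
      ((isFinitary_wordMean p).mono fun y => ?_)
    change κ ≤ E fun s => excess ρ B x (pullback (CSTree.prepend y) s)
    simpa only [excess_pullback] using hκ _
  · simpa only [henergy, add_zero] using hn j

theorem le_prod_mem_favorable (a : α) (hκ : 0 ≤ κ) (hE : ∀ x, κ ≤ E (excess ρ B x))
    (n : Stream' ℕ) (m : ℕ) (t : List α) :
    κ / (2 * (1 + |ρ|)) ≤ ((blockMean (Option α) n m).prod E)
      fun r => ind (t ∈ favorable a ρ B m (κ / 2) r) := by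
  refine Mean.div_two_mul_le_apply_ind _ (by positivity) hκ
    (fun r => abs_resampledWeave_le (fun x => abs_excess_le ρ B x r.2) m _ _) ?_
  refine ((blockMean (Option α) n m).apply_const κ).symm.trans_le
    ((isFinitary_blockMean n m).mono fun ω => ?_)
  change κ ≤ E fun s => resampleBlocks a (ω.map (instantiate · a)) m fun ω' =>
    excess ρ B ((CSTree.weave ω').eval (t.map some)) s
  rw [(isFinitary_resampleBlocks a _ m).comm]
  exact (Mean.apply_const _ κ).symm.trans_le
    ((isFinitary_resampleBlocks a _ m).mono fun ω' => hE _)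

theorem exists_mean_sq_resampledDeviation_le (a : α) (hE : TreeFree 1 (E.map base))
    (hκ : ∀ x, κ ≤ E (excess ρ B x)) (m : ℕ) {ε : ℝ} (hε : 0 < ε) :
    ∃ (E₀ : Mean (Config α)) (n : Stream' ℕ), TreeFree 1 (E₀.map base) ∧
      (∀ x, κ ≤ E₀ (excess ρ B x)) ∧ ∀ t : List (Option α), t.length < m →
        ((blockMean (Option α) n m).prod E₀) (fun r =>
          resampledDeviation a m (r.1.map (instantiate · a)) (excess ρ B · r.2) t ^ 2) ≤ ε := by
  set Q := (Fintype.card (Option α) : ℝ) ^ m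
  have hQ : 0 < Q := by positivity
  obtain ⟨E₀, n, hE₀, hκ₀, hn⟩ := exists_mean_energy_le a hE hκ (ε := ε / Q) (by positivity)
  refine ⟨E₀, n, hE₀, hκ₀, fun t ht => ?_⟩
  have hcard : (Fintype.card (Option α) : ℝ) ^ t.length ≤ Q :=
    pow_le_pow_right₀ (Nat.one_le_cast.2 Fintype.card_pos) ht.le
  calc ((blockMean (Option α) n m).prod E₀) (fun r =>
        resampledDeviation a m (r.1.map (instantiate · a)) (excess ρ B · r.2) t ^ 2)
    _ ≤ (Fintype.card (Option α) : ℝ) ^ t.length * (ε / Q) :=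
      prod_sq_resampledDeviation_le a (abs_excess_le ρ B) E₀ hn ht
    _ ≤ Q * (ε / Q) := by gcongr
    _ = ε := mul_div_cancel₀ ε hQ.ne'

theorem prod_ind_mul_excess [DecidableEq α] (ha : a ∉ B) (hc : 0 < c) (n : Stream' ℕ)
    {F : Set (List α)} {y : List (Option α)} (hy : y.length < m) (hF : instantiate y a ∈ F) :
    ((blockMean (Option α) n m).prod E) (fun r =>
        ind (F ⊆ favorable a ρ (insert a B) m c r) *
          excess ρ B ((CSTree.weave r.1).eval y) r.2) =
      ((blockMean (Option α) n m).prod E) fun r =>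
        ind (F ⊆ favorable a ρ (insert a B) m c r) *
          resampledWeave a m (r.1.map (instantiate · a)) (excess ρ (insert a B) · r.2) y := by
  have hinsert : ∀ ω s, ind (F ⊆ favorable a ρ (insert a B) m c (ω, s)) *
      excess ρ B ((CSTree.weave ω).eval y) s = ind (F ⊆ favorable a ρ (insert a B) m c (ω, s)) *
        excess ρ (insert a B) ((CSTree.weave ω).eval y) s := fun ω s => by
    by_cases h : F ⊆ favorable a ρ (insert a B) m c (ω, s)
    · rw [excess_insert ρ ha, ind_of_true (instantiate_eval_weave_mem_of_favorable ha hc hy (h hF)),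
        one_mul]
    · rw [ind_of_false h, zero_mul, zero_mul]
  simp only [Mean.prod_apply, hinsert, ← (isFinitary_blockMean n m).comm]
  refine E.apply_congr fun s => (blockMean_mul_resampledWeave a n m
    (e := fun ω => ind (F ⊆ favorable a ρ (insert a B) m c (ω, s))) (fun ω ω' h => ?_)
    (excess ρ (insert a B) · s) y).symm
  rw [favorable_congr a ρ _ h]

theorem treeFree_blockMean_prod_pullback (hE : TreeFree 1 (E.map base)) (n : Stream' ℕ) (m : ℕ)
    (V : CSTree (Option α)) : TreeFree 1 (((blockMean (Option α) n m).prod E).map fun r =>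
      (pullback V (pullback (CSTree.weave r.1) r.2)).base) :=
  TreeFree.bind (E := fun _ => ((E.map base).map _).map _) _
    fun ω => (hE.map_preimage (CSTree.weave ω)).map_preimage V

/-- The resampled average at `y` differs little from that at the word `(instantiate y a).map some`,
where it is at least `c` on the event that `F` is favorable. -/
theorem sub_le_prod_ind_mul_excess [DecidableEq α] (ha : a ∉ B) (hc : 0 < c) {n : Stream' ℕ}
    {l : ℝ} (hl : 0 ≤ l)
    (hdev : ∀ t : List (Option α), t.length < m → ((blockMean (Option α) n m).prod E) (fun r =>
      resampledDeviation a m (r.1.map (instantiate · a)) (excess ρ (insert a B) · r.2) t ^ 2) ≤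
        l ^ 2)
    {F : Set (List α)} {y : List (Option α)} (hy : y.length < m) (hF : instantiate y a ∈ F) :
    ((blockMean (Option α) n m).prod E) (fun r =>
        ind (F ⊆ favorable a ρ (insert a B) m c r)) * c - 2 * l ≤
      ((blockMean (Option α) n m).prod E) fun r =>
        ind (F ⊆ favorable a ρ (insert a B) m c r) *
          excess ρ B ((CSTree.weave r.1).eval y) r.2 := by
  rw [prod_ind_mul_excess ha hc n hy hF]
  refine Mean.sub_le_apply_ind_mul _ (isBdd_resampledWeave_excess a ρ _ m y)
    (isBdd_resampledDeviation_excess a ρ _ m y)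
    (isBdd_resampledDeviation_excess a ρ _ m ((instantiate y a).map some)) hl (hdev y hy)
    (hdev _ (by rwa [List.length_map, length_instantiate])) fun r hr => ?_
  rw [resampledWeave_eq_add_sub (t := y) (instantiate_map_some _ _).symm]
  gcongr
  exact hr hF

end Fintype

theorem exists_mean_forall_length_le [Finite α] [DecidableEq α] (hα : LineDensityProperty α)
    (ha : a ∉ B) (hκ : 0 < κ) (hE : TreeFree 1 (E.map base))
    (hexcess : ∀ x, κ ≤ E (excess ρ (insert a B) x)) (d : ℕ) :
    ∃ E' : Mean (Config α), TreeFree 1 (E'.map base) ∧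
      ∀ x : List (Option α), x.length ≤ d → κ / 4 ≤ E' (excess ρ B x) := by
  have := Fintype.ofFinite α
  have : Nonempty α := ⟨a⟩
  obtain ⟨M, π, hπ, huniform⟩ :=
    hα.exists_uniform_levels d (κ := κ / (2 * (1 + |ρ|))) (by positivity)
  set l := π * κ / 8 with hl
  obtain ⟨E₀, n, hE₀, hE₀excess, hdev⟩ :=
    exists_mean_sq_resampledDeviation_le a hE hexcess (M + 1) (ε := l ^ 2) (by positivity)
  let J := (blockMean (Option α) n (M + 1)).prod E₀
  obtain ⟨V, hVlen, hV⟩ := huniform (J.map (favorable a ρ (insert a B) (M + 1) (κ / 2)))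
    fun t _ => le_prod_mem_favorable a hκ.le hE₀excess n (M + 1) t
  let e := fun r => ind (V.levels d ⊆ favorable a ρ (insert a B) (M + 1) (κ / 2) r)
  have hJe : 0 < J e := hπ.trans_le hV
  let E' : Mean (Config α) := (J.cond e (IsBdd.ind _) (fun _ => ind_nonneg _) hJe).map fun r =>
    pullback (V.map some) (pullback (CSTree.weave r.1) r.2)
  refine ⟨E', (treeFree_blockMean_prod_pullback hE₀ n (M + 1) _).map_cond (IsBdd.ind _)
    (fun _ => ind_nonneg _) hJe, fun x hx => ?_⟩
  have hroot : instantiate ((V.map some).eval x) a = V.eval (instantiate x a) := by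
    rw [instantiate_eval, CSTree.map_map_some]
  have hlen : ((V.map some).eval x).length < M + 1 := by
    rw [← length_instantiate _ a, hroot]
    exact Nat.lt_succ_iff.2 (hVlen _ (by rwa [length_instantiate]))
  have hmem : instantiate ((V.map some).eval x) a ∈ V.levels d := by
    rw [hroot]
    exact V.levels_subset_iff.1 subset_rfl _ (by rwa [length_instantiate])
  have hbound := sub_le_prod_ind_mul_excess ha (half_pos hκ) (by positivity) hdev hlen hmem
  have hE' : J e * E' (excess ρ B x) =
      J fun r => e r * excess ρ B ((CSTree.weave r.1).eval ((V.map some).eval x)) r.2 := by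
    simp only [E', Mean.map_apply, Mean.mul_cond_apply, excess_pullback]
  refine le_of_mul_le_mul_left ?_ hJe
  rw [hE']
  refine le_trans ?_ hbound
  have hπJ : π ≤ J e := hV
  change J e * (κ / 4) ≤ J e * (κ / 2) - 2 * l
  rw [hl]
  nlinarith

theorem HasExcess.of_insert [Finite α] [DecidableEq α] (hα : LineDensityProperty α) (ha : a ∉ B)
    (h : HasExcess (insert a B) ρ) : HasExcess B ρ := by
  obtain ⟨E, hE, κ, hκ, hexcess⟩ := h
  choose F hF hFexcess using exists_mean_forall_length_le hα ha hκ hE hexcess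
  refine ⟨Mean.seqLimit F, fun V => Mean.seqLimit_apply_eq F fun d => hF d V, κ / 4,
    by positivity, fun x => ?_⟩
  refine Mean.le_seqLimit F (isBdd_excess ρ B x) tendsto_const_nhds ?_
  filter_upwards [eventually_ge_atTop x.length] with d hd
  simpa using hFexcess d x hd

theorem HasExcess.empty_of_univ [Fintype α] (hα : LineDensityProperty α)
    (h : HasExcess (univ : Finset α) ρ) : HasExcess (∅ : Finset α) ρ := by
  classical
  have hall : ∀ B : Finset α, HasExcess B ρ → HasExcess (∅ : Finset α) ρ := fun B => by
    induction B using Finset.induction_on with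
    | empty => exact id
    | insert a B ha ih => exact fun h => ih (h.of_insert hα ha)
  exact hall _ h

end Config

/-- Otherwise a line-free random set of maximal density `δ` would yield one of larger density. -/
theorem LineDensityProperty.option [Finite α] [Nonempty α] (hα : LineDensityProperty α) :
    LineDensityProperty (Option α) := by
  have := Fintype.ofFinite α
  by_contra hc
  obtain ⟨δ, hδ, hex, hmax⟩ := exists_isLineFree_maximal hc
  obtain ⟨θ, hθ, E, hE, hfreq⟩ := hα.exists_frequently_le_sublineDensity hδ hex
  obtain ⟨ρ, hρ, hexcess⟩ := hE.exists_hasExcess hδ hmax hθ hfreq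
  obtain ⟨E', δ', hδ', hE'⟩ := (hexcess.empty_of_univ hα).exists_isLineFree
  exact absurd (hmax E' δ' hE') (not_le.2 (hρ.trans hδ'))

end Removal

/-! ### Finite alphabets and densities -/

section FiniteAlphabet

theorem LineDensityProperty.of_equiv {K L : Type*} (e : K ≃ L) (hK : LineDensityProperty K) :
    LineDensityProperty L := by
  intro E κ hκ hE h
  refine hK (E.map fun X => {t | t.map e ∈ X}) κ hκ (fun V => ?_) fun t => h (t.map e)
  refine E.apply_eq_zero_of_le (fun X => ind_nonneg _) (IsBdd.ind _) (fun X => ?_) (hE (V.map e))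
  refine ind_mono fun hX => CSTree.levels_subset_iff.2 fun t ht => ?_
  have hnode := CSTree.levels_subset_iff.1 hX (t.map e.symm) (by simpa using ht)
  simpa [CSTree.map_eval] using hnode

theorem lineDensityProperty_fin (n : ℕ) : LineDensityProperty (Fin (n + 1)) := by
  induction n with
  | zero => exact (lineDensityProperty_of_unique Unit).of_equiv (Equiv.ofUnique Unit (Fin 1))
  | succ n ih => exact ih.option.of_equiv (finSuccEquiv (n + 1)).symm

theorem ncard_length_eq_succ_le {K : Type*} [Fintype K] (A : Set (List K)) (n : ℕ) :
    {x ∈ A | x.length = n + 1}.ncard ≤ ∑ b : K, {x ∈ (b :: ·) ⁻¹' A | x.length = n}.ncard := by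
  have hfin : ∀ b : K, {x ∈ (b :: ·) ⁻¹' A | x.length = n}.Finite := fun b =>
    (List.finite_length_eq K n).subset fun x hx => hx.2
  have hcover : {x ∈ A | x.length = n + 1} ⊆
      ⋃ b : K, (b :: ·) '' {x ∈ (b :: ·) ⁻¹' A | x.length = n} := by
    rintro (_ | ⟨b, x⟩) ⟨hx, hlen⟩
    · exact absurd hlen (Nat.succ_ne_zero n).symm
    · exact Set.mem_iUnion.2 ⟨b, x, ⟨hx, Nat.succ_injective hlen⟩, rfl⟩
  calc {x ∈ A | x.length = n + 1}.ncard
    _ ≤ (⋃ b : K, (b :: ·) '' {x ∈ (b :: ·) ⁻¹' A | x.length = n}).ncard :=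
      Set.ncard_le_ncard hcover (Set.finite_iUnion fun b => (hfin b).image _)
    _ ≤ ∑ b : K, ((b :: ·) '' {x ∈ (b :: ·) ⁻¹' A | x.length = n}).ncard :=
      Set.ncard_iUnion_le_of_fintype _
    _ ≤ ∑ b : K, {x ∈ (b :: ·) ⁻¹' A | x.length = n}.ncard :=
      sum_le_sum fun b _ => Set.ncard_image_le (hfin b)

theorem ncard_le_card_pow_mul_wordMean {K : Type*} [Fintype K] [Nonempty K] (A : Set (List K))
    (n : ℕ) : ({x ∈ A | x.length = n}.ncard : ℝ) ≤
      (Fintype.card K : ℝ) ^ n * wordMean K n fun x => ind (x ∈ A) := by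
  induction n generalizing A with
  | zero =>
    have hsub : {x ∈ A | x.length = 0} ⊆ {[]} := fun x hx => List.length_eq_zero_iff.1 hx.2
    by_cases h : [] ∈ A
    · simpa [ind_of_true h] using Set.ncard_le_ncard hsub
    · have hempty : {x ∈ A | x.length = 0} = ∅ :=
        Set.eq_empty_of_forall_notMem fun x hx => h (hsub hx ▸ hx.1)
      rw [hempty, Set.ncard_empty, wordMean_zero, ind_of_false h]
      simp
  | succ n ih =>
    calc ({x ∈ A | x.length = n + 1}.ncard : ℝ)
      _ ≤ ∑ b : K, ({x ∈ (b :: ·) ⁻¹' A | x.length = n}.ncard : ℝ) :=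
        mod_cast ncard_length_eq_succ_le A n
      _ ≤ ∑ b : K, (Fintype.card K : ℝ) ^ n * wordMean K n fun x => ind (b :: x ∈ A) :=
        sum_le_sum fun b _ => ih _
      _ = (Fintype.card K : ℝ) ^ (n + 1) * wordMean K (n + 1) fun x => ind (x ∈ A) := by
        rw [← mul_sum, wordMean_succ, unif_apply, pow_succ, mul_assoc,
          mul_inv_cancel_left₀ (by positivity)]

theorem dens_le_wordMean (k n : ℕ) [NeZero k] (A : Set (Word k)) :
    _root_.dens k n A ≤ wordMean (Fin k) n fun x => ind (x ∈ A) := by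
  have hk : 0 < (k : ℝ) ^ n := pow_pos (Nat.cast_pos.2 (NeZero.pos k)) n
  rw [_root_.dens, div_le_iff₀ hk, mul_comm]
  simpa only [Fintype.card_fin] using ncard_le_card_pow_mul_wordMean A n

theorem csWord_eq_eval {k : ℕ} (V : CSTree (Fin k)) (n : ℕ) (a : ℕ → Fin k) :
    csWord V.root (fun i => none :: V.tails.get i) n a =
      V.eval ((List.range (n + 1)).map a) := by
  have hfill : ∀ (m : ℕ) (u : Stream' (List (Option (Fin k)))) (a : ℕ → Fin k),
      ((List.range m).map fun i => subst (none :: u.get i) (a i)).flatten =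
        fill u ((List.range m).map a) := by
    intro m
    induction m with
    | zero => exact fun u a => rfl
    | succ m ih =>
      intro u a
      rw [List.range_succ_eq_map, List.map_cons, List.map_cons, List.map_map, List.map_map,
        fill_cons, List.flatten_cons]
      exact congrArg (_ :: (instantiate u.head (a 0)) ++ ·) (ih u.tail fun i => a (i + 1))
  rw [csWord, hfill, CSTree.eval]

end FiniteAlphabet

end CarlsonSimpson

open CarlsonSimpson in
/-- **Theorem A** (density Carlson–Simpson theorem). -/
theorem density_carlson_simpson (k : ℕ) (hk : 2 ≤ k) (A : Set (Word k))
    (hA : 0 < Filter.atTop.limsup (fun n : ℕ => dens k n A)) :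
    ∃ (c : Word k) (w : ℕ → VWord k),
      (∀ n : ℕ, IsLeftVar (w n)) ∧ csSetInf c w ⊆ A := by
  obtain ⟨j, rfl⟩ : ∃ j, k = j + 1 := ⟨k - 1, by lia⟩
  have hbdd : Filter.atTop.IsCoboundedUnder (· ≤ ·) fun n : ℕ => dens (j + 1) n A :=
    Filter.isCoboundedUnder_le_of_le Filter.atTop (x := 0) fun n => by unfold dens; positivity
  have hfreq := (Filter.frequently_lt_of_lt_limsup hbdd (half_lt_self hA)).mono fun n hn =>
    hn.le.trans (dens_le_wordMean (j + 1) n A)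
  obtain ⟨V, hV⟩ := (lineDensityProperty_fin j).exists_tree_subset (half_pos hA) hfreq
  refine ⟨V.root, fun n => none :: V.tails.get n, fun n => rfl, ?_⟩
  rintro x (rfl | ⟨n, a, rfl⟩)
  · simpa using hV []
  · exact csWord_eq_eval V n a ▸ hV _
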